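/- arXiv:1211.2224 — 2 statements merged into one kernel-verified Lean document; each statement's English description precedes it below -/
import Mathlib

section
/- Let Ω = {(x₁,x₂) ∈ ℝ² : 0 < x₂ < x₁ < h} be an isosceles right triangle with legs of length h > 0, and let Γ = {x₁ = h, x₂ ∈ [0,h]} ∪ {x₂ = 0, x₁ ∈ [0,h]} be the union of the two legs. Then the sharp constant C₁(Ω,Γ) in the inequality ‖w‖_{L²(Ω)} ≤ C₁‖∇w‖_{L²(Ω)} for all w ∈ H̃¹(Ω,Γ) is equal to h/π. -/
open MeasureTheory Real

/-!
Reflect a function on the triangle evenly across the hypotenuse to a function `u` on the square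
`(0, h)²`. The slice integrals `M x = ∫ u (x, y) dy` then have the two legs as boundary values, so
the hypothesis says `M 0 + M h = 0`. Wirtinger's inequality with constant `h / π` holds both for
functions taking opposite values at the endpoints of an interval of length `h`, which bounds `M`,
and for functions of mean zero, which bounds each slice `u (x, ·)` around its mean. Adding the two
gives the inequality. The function `cos (π x₁ / h) + cos (π x₂ / h)` attains equality.
-/

open Set Filter Topology

section Interval

variable {f g : ℝ → ℝ} {a b c k : ℝ}

/-- Completing the square with a solution `T` of the Riccati equation `T' = κ + T ^ 2`:
`(f' + T f) ^ 2 = f' ^ 2 - κ f ^ 2 + (T f ^ 2)'`. -/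
theorem mul_integral_sq_le_of_riccati {T : ℝ → ℝ} {κ : ℝ} (hab : a ≤ b)
    (hf : AbsolutelyContinuousOnInterval f a b)
    (hf' : IntervalIntegrable (fun x => deriv f x ^ 2) volume a b)
    (hT : AbsolutelyContinuousOnInterval T a b)
    (hT' : ∀ᵐ x, x ∈ Icc a b → HasDerivAt T (κ + T x ^ 2) x) :
    κ * ∫ x in a..b, f x ^ 2 ≤
      (∫ x in a..b, deriv f x ^ 2) + (T b * f b ^ 2 - T a * f a ^ 2) := by
  have hTf := hT.fun_mul hf
  have hf_sq : IntervalIntegrable (fun x => κ * f x ^ 2) volume a b :=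
    (hf.continuousOn.pow 2).intervalIntegrable.const_mul κ
  have h_int : IntervalIntegrable
      (fun x => deriv (fun x => T x * f x) x * f x + T x * f x * deriv f x) volume a b :=
    (hTf.intervalIntegrable_deriv.mul_continuousOn hf.continuousOn).add
      (hf.intervalIntegrable_deriv.continuousOn_mul hTf.continuousOn)
  have square_eq : ∫ x in a..b, (deriv f x + T x * f x) ^ 2 =
      ∫ x in a..b, (deriv f x ^ 2 - κ * f x ^ 2 +
        (deriv (fun x => T x * f x) x * f x + T x * f x * deriv f x)) := by
    refine intervalIntegral.integral_congr_ae ?_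
    filter_upwards [hf.ae_differentiableAt, hT'] with x hfx hTx hx
    have hx' := uIoc_subset_uIcc hx
    rw [((hTx (uIcc_of_le hab ▸ hx')).fun_mul (hfx hx').hasDerivAt).deriv]
    ring
  have square_nonneg : 0 ≤ ∫ x in a..b, (deriv f x + T x * f x) ^ 2 :=
    intervalIntegral.integral_nonneg hab fun x _ => sq_nonneg _
  rw [square_eq, intervalIntegral.integral_add (hf'.sub hf_sq) h_int,
    intervalIntegral.integral_sub hf' hf_sq, intervalIntegral.integral_const_mul,
    hTf.integral_deriv_mul_eq_sub hf] at square_nonneg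
  linarith

theorem sq_mul_integral_sq_le_tan (hab : a ≤ b) (hf : AbsolutelyContinuousOnInterval f a b)
    (hf' : IntervalIntegrable (fun x => deriv f x ^ 2) volume a b)
    (hcos : ∀ x ∈ Icc a b, cos (k * (x - c)) ≠ 0) :
    k ^ 2 * ∫ x in a..b, f x ^ 2 ≤ (∫ x in a..b, deriv f x ^ 2) +
      (k * tan (k * (b - c)) * f b ^ 2 - k * tan (k * (a - c)) * f a ^ 2) := by
  have smooth : ContDiffOn ℝ 1 (fun x => k * tan (k * (x - c))) (uIcc a b) := by
    rw [uIcc_of_le hab]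
    exact fun x hx => (contDiffAt_const.mul ((contDiffAt_tan.2 (hcos x hx)).comp x
      (by fun_prop : ContDiffAt ℝ 1 (fun x => k * (x - c)) x))).contDiffWithinAt
  refine mul_integral_sq_le_of_riccati hab hf hf' smooth.absolutelyContinuousOnInterval
    (ae_of_all _ fun x hx => ?_)
  have inner : HasDerivAt (fun x => k * (x - c)) k x := by
    simpa using ((hasDerivAt_id x).sub_const c).const_mul k
  refine (((hasDerivAt_tan (hcos x hx)).comp x inner).const_mul k).congr_deriv ?_
  rw [one_div, ← inv_one_add_tan_sq (hcos x hx), inv_inv]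
  ring

theorem sq_mul_integral_sq_le_of_antiperiodic (hk : 0 < k) (hab : a ≤ b) (hkab : k * (b - a) < π)
    (hf : AbsolutelyContinuousOnInterval f a b)
    (hf' : IntervalIntegrable (fun x => deriv f x ^ 2) volume a b) (hfab : f a + f b = 0) :
    k ^ 2 * ∫ x in a..b, f x ^ 2 ≤ ∫ x in a..b, deriv f x ^ 2 := by
  obtain ⟨z, hz, hfz⟩ : ∃ z ∈ uIcc a b, f z = 0 :=
    intermediate_value_uIcc hf.continuousOn
      (mem_uIcc.2 <| (le_total (f a) 0).imp (fun _ => ⟨by linarith, by linarith⟩)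
        fun _ => ⟨by linarith, by linarith⟩)
  have haz : uIcc a z ⊆ uIcc a b := uIcc_subset_uIcc_left hz
  have hzb : uIcc z b ⊆ uIcc a b := uIcc_subset_uIcc_right hz
  have hf_sq : IntervalIntegrable (fun x => f x ^ 2) volume a b :=
    (hf.continuousOn.pow 2).intervalIntegrable
  have hz' : z ∈ Icc a b := uIcc_of_le hab ▸ hz
  have left := sq_mul_integral_sq_le_tan (k := k) (c := z - (b - a) / 2) hz'.1 (hf.mono haz)
    (hf'.mono_set haz) fun x hx =>
      (cos_pos_of_mem_Ioo ⟨by nlinarith [hx.1, hz'.2], by nlinarith [hx.2]⟩).ne'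
  have right := sq_mul_integral_sq_le_tan (k := k) (c := z + (b - a) / 2) hz'.2 (hf.mono hzb)
    (hf'.mono_set hzb) fun x hx =>
      (cos_pos_of_mem_Ioo ⟨by nlinarith [hx.1], by nlinarith [hx.2, hz'.1]⟩).ne'
  rw [← intervalIntegral.integral_add_adjacent_intervals (hf_sq.mono_set haz) (hf_sq.mono_set hzb),
    ← intervalIntegral.integral_add_adjacent_intervals (hf'.mono_set haz) (hf'.mono_set hzb)]
  -- The phases differ by `b - a`: the left tangent at `a` equals the right tangent at `b`, and
  -- `f a ^ 2 = f b ^ 2`, so the boundary terms cancel.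
  rw [hfz, show a - (z - (b - a) / 2) = b - (z + (b - a) / 2) by ring,
    eq_neg_of_add_eq_zero_left hfab] at left
  rw [hfz] at right
  linarith

theorem integral_sq_le_of_antiperiodic (hab : a ≤ b)
    (hf : AbsolutelyContinuousOnInterval f a b)
    (hf' : IntervalIntegrable (fun x => deriv f x ^ 2) volume a b) (hfab : f a + f b = 0) :
    ∫ x in a..b, f x ^ 2 ≤ ((b - a) / π) ^ 2 * ∫ x in a..b, deriv f x ^ 2 := by
  rcases hab.eq_or_lt with rfl | hab'
  · simp
  have hk : 0 < π / (b - a) := div_pos pi_pos (sub_pos.2 hab')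
  have limit : (π / (b - a)) ^ 2 * ∫ x in a..b, f x ^ 2 ≤ ∫ x in a..b, deriv f x ^ 2 := by
    have cont : Continuous fun k : ℝ => k ^ 2 * ∫ x in a..b, f x ^ 2 := by fun_prop
    refine le_of_tendsto (cont.continuousWithinAt (s := Iio (π / (b - a)))) ?_
    filter_upwards [Ioo_mem_nhdsLT hk] with k hk'
    exact sq_mul_integral_sq_le_of_antiperiodic hk'.1 hab
      ((lt_div_iff₀ (sub_pos.2 hab')).1 hk'.2) hf hf' hfab
  calc ∫ x in a..b, f x ^ 2
      = ((b - a) / π) ^ 2 * ((π / (b - a)) ^ 2 * ∫ x in a..b, f x ^ 2) := by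
        have := (sub_pos.2 hab').ne'
        field_simp
    _ ≤ _ := by gcongr

theorem ae_deriv_const_add_intervalIntegral_eq (hg : IntervalIntegrable g volume a b) (C : ℝ) :
    ∀ᵐ x, x ∈ uIcc a b → deriv (fun t => C + ∫ s in a..t, g s) x = g x := by
  filter_upwards [hg.ae_hasDerivAt_integral] with x hx hxab
  exact ((hx hxab a left_mem_uIcc).const_add C).deriv

theorem integral_sq_const_add_primitive_le (hab : a ≤ b) {C : ℝ}
    (hg : IntervalIntegrable g volume a b)
    (hg_sq : IntervalIntegrable (fun x => g x ^ 2) volume a b)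
    (hC : C + (C + ∫ x in a..b, g x) = 0) :
    ∫ x in a..b, (C + ∫ t in a..x, g t) ^ 2 ≤ ((b - a) / π) ^ 2 * ∫ x in a..b, g x ^ 2 := by
  have ac : AbsolutelyContinuousOnInterval (fun x => C + ∫ t in a..x, g t) a b :=
    contDiffOn_const.absolutelyContinuousOnInterval.fun_add
      (hg.absolutelyContinuousOnInterval_intervalIntegral left_mem_uIcc)
  have deriv_sq : ∀ᵐ x, x ∈ uIoc a b →
      deriv (fun t => C + ∫ s in a..t, g s) x ^ 2 = g x ^ 2 := by
    filter_upwards [ae_deriv_const_add_intervalIntegral_eq hg C] with x hx hxab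
    rw [hx (uIoc_subset_uIcc hxab)]
  rw [← intervalIntegral.integral_congr_ae deriv_sq]
  exact integral_sq_le_of_antiperiodic hab ac
    (hg_sq.congr_ae ((ae_restrict_iff' measurableSet_uIoc).2 <|
      deriv_sq.mono fun x hx hxab => (hx hxab).symm)) (by simpa using hC)

theorem integral_primitive_mul_deriv_of_integral_eq_zero
    (hf : AbsolutelyContinuousOnInterval f a b) (hf_mean : ∫ x in a..b, f x = 0) :
    ∫ x in a..b, (∫ t in a..x, f t) * deriv f x = -∫ x in a..b, f x ^ 2 := by
  have hf_int : IntervalIntegrable f volume a b := hf.continuousOn.intervalIntegrable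
  have deriv_mul : ∫ x in a..b, deriv (fun x => ∫ t in a..x, f t) x * f x =
      ∫ x in a..b, f x ^ 2 := by
    refine intervalIntegral.integral_congr_ae ?_
    filter_upwards [hf_int.ae_hasDerivAt_integral] with x hx hxab
    rw [(hx (uIoc_subset_uIcc hxab) a left_mem_uIcc).deriv, sq]
  rw [(hf_int.absolutelyContinuousOnInterval_intervalIntegral
    left_mem_uIcc).integral_mul_deriv_eq_deriv_mul hf, deriv_mul, hf_mean,
    intervalIntegral.integral_same]
  ring

/-- Duality: with `F` the primitive of `f` and `ℓ = (b - a) / π`, the primitive satisfies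
`∫ F ^ 2 ≤ ℓ ^ 2 ∫ f ^ 2`, and expanding `0 ≤ ∫ (ℓ ^ 2 f' + F) ^ 2` by parts gives the claim. -/
theorem integral_sq_le_of_integral_eq_zero (hab : a ≤ b)
    (hf : AbsolutelyContinuousOnInterval f a b)
    (hf' : IntervalIntegrable (fun x => deriv f x ^ 2) volume a b)
    (hf_mean : ∫ x in a..b, f x = 0) :
    ∫ x in a..b, f x ^ 2 ≤ ((b - a) / π) ^ 2 * ∫ x in a..b, deriv f x ^ 2 := by
  rcases hab.eq_or_lt with rfl | hab'
  · simp
  set L := ((b - a) / π) ^ 2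
  have hL : 0 < L := by have := sub_pos.2 hab'; positivity
  set F : ℝ → ℝ := fun x => ∫ t in a..x, f t
  have hf_int : IntervalIntegrable f volume a b := hf.continuousOn.intervalIntegrable
  have hF : AbsolutelyContinuousOnInterval F a b :=
    hf_int.absolutelyContinuousOnInterval_intervalIntegral left_mem_uIcc
  have primitive_le : ∫ x in a..b, F x ^ 2 ≤ L * ∫ x in a..b, f x ^ 2 := by
    simpa using integral_sq_const_add_primitive_le (C := 0) hab hf_int
      (hf.continuousOn.pow 2).intervalIntegrable (by simpa using hf_mean)
  have square_eq : ∫ x in a..b, (L * deriv f x + F x) ^ 2 =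
      L ^ 2 * (∫ x in a..b, deriv f x ^ 2) + 2 * L * (∫ x in a..b, F x * deriv f x) +
        ∫ x in a..b, F x ^ 2 := by
    have i₁ := hf'.const_mul (L ^ 2)
    have i₂ := (hf.intervalIntegrable_deriv.continuousOn_mul hF.continuousOn).const_mul (2 * L)
    have i₃ : IntervalIntegrable (fun x => F x ^ 2) volume a b :=
      (hF.continuousOn.pow 2).intervalIntegrable
    rw [← intervalIntegral.integral_const_mul, ← intervalIntegral.integral_const_mul,
      ← intervalIntegral.integral_add i₁ i₂, ← intervalIntegral.integral_add (i₁.add i₂) i₃]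
    congr with x
    ring
  have square_nonneg : 0 ≤ ∫ x in a..b, (L * deriv f x + F x) ^ 2 :=
    intervalIntegral.integral_nonneg hab fun x _ => sq_nonneg _
  rw [square_eq, integral_primitive_mul_deriv_of_integral_eq_zero hf hf_mean] at square_nonneg
  refine le_of_mul_le_mul_left ?_ hL
  linarith

theorem integral_sub_average_sq (hab : a < b) (hf : IntervalIntegrable f volume a b)
    (hf_sq : IntervalIntegrable (fun x => f x ^ 2) volume a b) :
    ∫ x in a..b, (f x - (∫ t in a..b, f t) / (b - a)) ^ 2 =
      (∫ x in a..b, f x ^ 2) - (∫ x in a..b, f x) ^ 2 / (b - a) := by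
  set m := (∫ t in a..b, f t) / (b - a) with hm
  have expand : ∀ x, (f x - m) ^ 2 = f x ^ 2 - 2 * m * f x + m ^ 2 := fun x => by ring
  simp only [expand]
  rw [intervalIntegral.integral_add (hf_sq.sub (hf.const_mul _)) (by simp),
    intervalIntegral.integral_sub hf_sq (hf.const_mul _), intervalIntegral.integral_const_mul,
    intervalIntegral.integral_const, hm, smul_eq_mul]
  have := (sub_pos.2 hab).ne'
  field_simp
  ring

theorem sq_integral_le (hab : a < b) (hf : IntervalIntegrable f volume a b)
    (hf_sq : IntervalIntegrable (fun x => f x ^ 2) volume a b) :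
    (∫ x in a..b, f x) ^ 2 ≤ (b - a) * ∫ x in a..b, f x ^ 2 := by
  have variance_nonneg : 0 ≤ ∫ x in a..b, (f x - (∫ t in a..b, f t) / (b - a)) ^ 2 :=
    intervalIntegral.integral_nonneg hab.le fun x _ => sq_nonneg _
  rw [integral_sub_average_sq hab hf hf_sq, sub_nonneg, div_le_iff₀' (sub_pos.2 hab)]
    at variance_nonneg
  exact variance_nonneg

theorem integral_sq_le_average_add_deriv (hab : a < b)
    (hf : AbsolutelyContinuousOnInterval f a b)
    (hf' : IntervalIntegrable (fun x => deriv f x ^ 2) volume a b) :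
    ∫ x in a..b, f x ^ 2 ≤
      (∫ x in a..b, f x) ^ 2 / (b - a) + ((b - a) / π) ^ 2 * ∫ x in a..b, deriv f x ^ 2 := by
  have hf_int : IntervalIntegrable f volume a b := hf.continuousOn.intervalIntegrable
  set m := (∫ t in a..b, f t) / (b - a)
  have hm_mul : (b - a) * m = ∫ x in a..b, f x := mul_div_cancel₀ _ (sub_pos.2 hab).ne'
  have centered := integral_sq_le_of_integral_eq_zero (f := fun x => f x - m) hab.le
    (hf.fun_sub contDiffOn_const.absolutelyContinuousOnInterval)
    (by simpa using hf')
    (by rw [intervalIntegral.integral_sub hf_int (by simp)]; simp [hm_mul])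
  rw [integral_sub_average_sq hab hf_int (hf.continuousOn.pow 2).intervalIntegrable] at centered
  simp only [deriv_sub_const] at centered
  linarith

end Interval

section Rectangle

variable {f φ : ℝ × ℝ → ℝ} {a b c d : ℝ}

theorem lineDeriv_one_zero (f : ℝ × ℝ → ℝ) (x y : ℝ) :
    lineDeriv ℝ f (x, y) (1, 0) = deriv (fun s => f (s, y)) x := by
  simpa [lineDeriv] using deriv_comp_const_add (fun s => f (s, y)) x 0

theorem lineDeriv_zero_one (f : ℝ × ℝ → ℝ) (x y : ℝ) :
    lineDeriv ℝ f (x, y) (0, 1) = deriv (fun s => f (x, s)) y := by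
  simpa [lineDeriv] using deriv_comp_const_add (fun s => f (x, s)) y 0

theorem setIntegral_Ioc_prod_Ioc (hab : a ≤ b) (hcd : c ≤ d)
    (hφ : IntegrableOn φ (Ioc a b ×ˢ Ioc c d)) :
    ∫ p in Ioc a b ×ˢ Ioc c d, φ p = ∫ x in a..b, ∫ y in c..d, φ (x, y) := by
  rw [Measure.volume_eq_prod, setIntegral_prod φ hφ]
  simp only [intervalIntegral.integral_of_le hab, intervalIntegral.integral_of_le hcd]

theorem intervalIntegrable_intervalIntegral (hab : a ≤ b) (hcd : c ≤ d)
    (hφ : IntegrableOn φ (Ioc a b ×ˢ Ioc c d)) :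
    IntervalIntegrable (fun x => ∫ y in c..d, φ (x, y)) volume a b := by
  rw [IntegrableOn, Measure.volume_eq_prod, ← Measure.prod_restrict] at hφ
  simpa only [intervalIntegrable_iff_integrableOn_Ioc_of_le hab, IntegrableOn,
    intervalIntegral.integral_of_le hcd] using hφ.integral_prod_left

theorem ae_intervalIntegrable_slice (hcd : c ≤ d) (hφ : IntegrableOn φ (Ioc a b ×ˢ Ioc c d)) :
    ∀ᵐ x ∂volume.restrict (Ioc a b), IntervalIntegrable (fun y => φ (x, y)) volume c d := by
  rw [IntegrableOn, Measure.volume_eq_prod, ← Measure.prod_restrict] at hφ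
  simpa only [intervalIntegrable_iff_integrableOn_Ioc_of_le hcd, IntegrableOn]
    using hφ.prod_right_ae

theorem intervalIntegral_slice_eq_add_integral_lineDeriv (hcd : c ≤ d)
    (hf₁ : ∀ y ∈ Icc c d, AbsolutelyContinuousOnInterval (fun x => f (x, y)) a b)
    (hf₂ : ∀ x ∈ Icc a b, AbsolutelyContinuousOnInterval (fun y => f (x, y)) c d)
    (h₁ : IntegrableOn (fun p => lineDeriv ℝ f p (1, 0)) (Ioc a b ×ˢ Ioc c d))
    {x : ℝ} (hx : x ∈ Icc a b) :
    ∫ y in c..d, f (x, y) =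
      (∫ y in c..d, f (a, y)) + ∫ s in a..x, ∫ y in c..d, lineDeriv ℝ f (s, y) (1, 0) := by
  have hab : a ≤ b := hx.1.trans hx.2
  have slice_int : ∀ x ∈ Icc a b, IntervalIntegrable (fun y => f (x, y)) volume c d :=
    fun x hx => (hf₂ x hx).continuousOn.intervalIntegrable
  have ftc : ∀ y ∈ uIcc c d, ∫ s in a..x, lineDeriv ℝ f (s, y) (1, 0) = f (x, y) - f (a, y) := by
    intro y hy
    have h_sub : uIcc a x ⊆ uIcc a b := uIcc_subset_uIcc_left (uIcc_of_le hab ▸ hx)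
    simpa only [lineDeriv_one_zero] using
      ((hf₁ y (uIcc_of_le hcd ▸ hy)).mono h_sub).integral_deriv_eq_sub
  have fubini := intervalIntegral_intervalIntegral_swap (a := a) (b := x) (c := c) (d := d)
    (F := fun s y => lineDeriv ℝ f (s, y) (1, 0)) <| by
      rw [uIoc_of_le hx.1, uIoc_of_le hcd]
      exact h₁.mono_set (prod_mono_left (Ioc_subset_Ioc_right hx.2))
  rw [fubini, intervalIntegral.integral_congr ftc,
    intervalIntegral.integral_sub (slice_int x hx) (slice_int a (left_mem_Icc.2 hab))]
  ring

instance isFiniteMeasure_restrict_Ioc_prod_Ioc :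
    IsFiniteMeasure (volume.restrict (Ioc a b ×ˢ Ioc c d)) := by
  rw [Measure.volume_eq_prod, ← Measure.prod_restrict]
  infer_instance

theorem ae_sq_intervalIntegral_slice_le (hcd : c < d)
    (hφ : MemLp φ 2 (volume.restrict (Ioc a b ×ˢ Ioc c d))) :
    ∀ᵐ x ∂volume.restrict (Ioc a b),
      (∫ y in c..d, φ (x, y)) ^ 2 ≤ (d - c) * ∫ y in c..d, φ (x, y) ^ 2 := by
  filter_upwards [ae_intervalIntegrable_slice hcd.le (hφ.integrable one_le_two),
    ae_intervalIntegrable_slice hcd.le hφ.integrable_sq] with x hx hx_sq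
  exact sq_integral_le hcd hx hx_sq

theorem intervalIntegrable_sq_intervalIntegral_slice (hab : a ≤ b) (hcd : c < d)
    (hφ : MemLp φ 2 (volume.restrict (Ioc a b ×ˢ Ioc c d))) :
    IntervalIntegrable (fun x => (∫ y in c..d, φ (x, y)) ^ 2) volume a b := by
  have slice_int := intervalIntegrable_intervalIntegral hab hcd.le (hφ.integrable one_le_two)
  have slice_sq_int := intervalIntegrable_intervalIntegral hab hcd.le hφ.integrable_sq
  rw [intervalIntegrable_iff_integrableOn_Ioc_of_le hab] at slice_int slice_sq_int ⊢
  refine (slice_sq_int.const_mul (d - c)).mono' (slice_int.aestronglyMeasurable.pow 2) ?_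
  filter_upwards [ae_sq_intervalIntegral_slice_le hcd hφ] with x hx
  rwa [norm_of_nonneg (sq_nonneg _)]

theorem integral_sq_intervalIntegral_slice_le (hab : a ≤ b) (hcd : c < d)
    (hφ : MemLp φ 2 (volume.restrict (Ioc a b ×ˢ Ioc c d))) :
    ∫ x in a..b, (∫ y in c..d, φ (x, y)) ^ 2 ≤
      (d - c) * ∫ p in Ioc a b ×ˢ Ioc c d, φ p ^ 2 := by
  rw [setIntegral_Ioc_prod_Ioc hab hcd.le hφ.integrable_sq, ← intervalIntegral.integral_const_mul]
  refine intervalIntegral.integral_mono_ae_restrict hab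
    (intervalIntegrable_sq_intervalIntegral_slice hab hcd hφ)
    ((intervalIntegrable_intervalIntegral hab hcd.le hφ.integrable_sq).const_mul _) ?_
  rw [restrict_Ioc_eq_restrict_Icc.symm]
  exact ae_sq_intervalIntegral_slice_le hcd hφ

theorem integral_sq_slice_le_of_antiperiodic (hab : a ≤ b) (hcd : c < d)
    (hf₁ : ∀ y ∈ Icc c d, AbsolutelyContinuousOnInterval (fun x => f (x, y)) a b)
    (hf₂ : ∀ x ∈ Icc a b, AbsolutelyContinuousOnInterval (fun y => f (x, y)) c d)
    (h₁ : MemLp (fun p => lineDeriv ℝ f p (1, 0)) 2 (volume.restrict (Ioc a b ×ˢ Ioc c d)))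
    (hf_edges : (∫ y in c..d, f (a, y)) + ∫ y in c..d, f (b, y) = 0) :
    ∫ x in a..b, (∫ y in c..d, f (x, y)) ^ 2 ≤
      ((b - a) / π) ^ 2 * ((d - c) *
        ∫ p in Ioc a b ×ˢ Ioc c d, lineDeriv ℝ f p (1, 0) ^ 2) := by
  have h₁_int := h₁.integrable one_le_two
  set P : ℝ → ℝ := fun x => ∫ y in c..d, lineDeriv ℝ f (x, y) (1, 0)
  have hP : IntervalIntegrable P volume a b :=
    intervalIntegrable_intervalIntegral hab hcd.le h₁_int
  have hP_sq : IntervalIntegrable (fun x => P x ^ 2) volume a b :=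
    intervalIntegrable_sq_intervalIntegral_slice (φ := fun p => lineDeriv ℝ f p (1, 0)) hab hcd h₁
  have slice_eq : ∀ x ∈ Icc a b,
      ∫ y in c..d, f (x, y) = (∫ y in c..d, f (a, y)) + ∫ s in a..x, P s := fun x hx =>
    intervalIntegral_slice_eq_add_integral_lineDeriv hcd.le hf₁ hf₂ h₁_int hx
  rw [slice_eq b (right_mem_Icc.2 hab)] at hf_edges
  calc ∫ x in a..b, (∫ y in c..d, f (x, y)) ^ 2
      = ∫ x in a..b, ((∫ y in c..d, f (a, y)) + ∫ s in a..x, P s) ^ 2 :=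
        intervalIntegral.integral_congr fun x hx => by
          simp only [slice_eq x (uIcc_of_le hab ▸ hx)]
    _ ≤ ((b - a) / π) ^ 2 * ∫ x in a..b, P x ^ 2 :=
        integral_sq_const_add_primitive_le hab hP hP_sq hf_edges
    _ ≤ _ := by
        gcongr
        exact integral_sq_intervalIntegral_slice_le hab hcd h₁

theorem ae_integral_sq_slice_le (hcd : c < d)
    (hf₂ : ∀ x ∈ Icc a b, AbsolutelyContinuousOnInterval (fun y => f (x, y)) c d)
    (h₂ : MemLp (fun p => lineDeriv ℝ f p (0, 1)) 2 (volume.restrict (Ioc a b ×ˢ Ioc c d))) :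
    ∀ᵐ x ∂volume.restrict (Ioc a b), ∫ y in c..d, f (x, y) ^ 2 ≤
      (∫ y in c..d, f (x, y)) ^ 2 / (d - c) +
        ((d - c) / π) ^ 2 * ∫ y in c..d, lineDeriv ℝ f (x, y) (0, 1) ^ 2 := by
  filter_upwards [ae_intervalIntegrable_slice hcd.le h₂.integrable_sq,
    ae_restrict_mem measurableSet_Ioc] with x hx_int hx
  simp only [lineDeriv_zero_one] at hx_int ⊢
  exact integral_sq_le_average_add_deriv hcd (hf₂ x (Ioc_subset_Icc_self hx)) hx_int

theorem setIntegral_Ioc_prod_Ioc_sq_le (hab : a ≤ b) (hcd : c < d)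
    (hf : MemLp f 2 (volume.restrict (Ioc a b ×ˢ Ioc c d)))
    (hf₁ : ∀ y ∈ Icc c d, AbsolutelyContinuousOnInterval (fun x => f (x, y)) a b)
    (hf₂ : ∀ x ∈ Icc a b, AbsolutelyContinuousOnInterval (fun y => f (x, y)) c d)
    (h₁ : MemLp (fun p => lineDeriv ℝ f p (1, 0)) 2 (volume.restrict (Ioc a b ×ˢ Ioc c d)))
    (h₂ : MemLp (fun p => lineDeriv ℝ f p (0, 1)) 2 (volume.restrict (Ioc a b ×ˢ Ioc c d)))
    (hf_edges : (∫ y in c..d, f (a, y)) + ∫ y in c..d, f (b, y) = 0) :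
    ∫ p in Ioc a b ×ˢ Ioc c d, f p ^ 2 ≤
      ((b - a) / π) ^ 2 * (∫ p in Ioc a b ×ˢ Ioc c d, lineDeriv ℝ f p (1, 0) ^ 2) +
        ((d - c) / π) ^ 2 * ∫ p in Ioc a b ×ˢ Ioc c d, lineDeriv ℝ f p (0, 1) ^ 2 := by
  have i_sq := intervalIntegrable_intervalIntegral hab hcd.le hf.integrable_sq
  have i_mean := (intervalIntegrable_sq_intervalIntegral_slice hab hcd hf).div_const (d - c)
  have i_deriv := (intervalIntegrable_intervalIntegral hab hcd.le h₂.integrable_sq).const_mul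
    (((d - c) / π) ^ 2)
  calc ∫ p in Ioc a b ×ˢ Ioc c d, f p ^ 2
      = ∫ x in a..b, ∫ y in c..d, f (x, y) ^ 2 :=
        setIntegral_Ioc_prod_Ioc hab hcd.le hf.integrable_sq
    _ ≤ ∫ x in a..b, ((∫ y in c..d, f (x, y)) ^ 2 / (d - c) +
          ((d - c) / π) ^ 2 * ∫ y in c..d, lineDeriv ℝ f (x, y) (0, 1) ^ 2) :=
        intervalIntegral.integral_mono_ae_restrict hab i_sq (i_mean.add i_deriv)
          (restrict_Ioc_eq_restrict_Icc (μ := volume) (a := a) (b := b) ▸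
            ae_integral_sq_slice_le hcd hf₂ h₂)
    _ = (∫ x in a..b, (∫ y in c..d, f (x, y)) ^ 2) / (d - c) + ((d - c) / π) ^ 2 *
          ∫ p in Ioc a b ×ˢ Ioc c d, lineDeriv ℝ f p (0, 1) ^ 2 := by
        rw [intervalIntegral.integral_add i_mean i_deriv, intervalIntegral.integral_div,
          intervalIntegral.integral_const_mul,
          ← setIntegral_Ioc_prod_Ioc hab hcd.le h₂.integrable_sq]
    _ ≤ _ := by
        gcongr
        rw [div_le_iff₀ (sub_pos.2 hcd)]
        linarith [integral_sq_slice_le_of_antiperiodic hab hcd hf₁ hf₂ h₁ hf_edges]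

end Rectangle

section LocallyLipschitz

theorem memLp_lineDeriv_of_locallyLipschitz {E F : Type*} [NormedAddCommGroup E] [NormedSpace ℝ E]
    [ProperSpace E] [MeasurableSpace E] [BorelSpace E] [NormedAddCommGroup F] [NormedSpace ℝ F]
    [CompleteSpace F] {μ : Measure E} [IsFiniteMeasureOnCompacts μ]
    {f : E → F} (hf : LocallyLipschitz f) {s : Set E} (hs : Bornology.IsBounded s) (p : ENNReal)
    (v : E) : MemLp (fun x => lineDeriv ℝ f x v) p (μ.restrict s) := by
  obtain ⟨r, hr⟩ := hs.subset_ball 0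
  obtain ⟨K, hK⟩ := hf.locallyLipschitzOn.exists_lipschitzOnWith_of_compact
    (isCompact_closedBall (0 : E) r)
  have finite : IsFiniteMeasure (μ.restrict (Metric.ball 0 r)) :=
    isFiniteMeasure_restrict.2 Metric.isBounded_ball.measure_lt_top.ne
  refine MemLp.mono_measure (Measure.restrict_mono_set μ hr) ?_
  refine MemLp.of_bound (aestronglyMeasurable_lineDeriv hf.continuous _) (K * ‖v‖) ?_
  refine (ae_restrict_iff' measurableSet_ball).2 (ae_of_all _ fun x hx => ?_)
  exact norm_lineDeriv_le_of_lipschitzOn ℝ (Metric.isOpen_ball.mem_nhds hx)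
    (hK.mono Metric.ball_subset_closedBall)

theorem memLp_two_of_continuous {X : Type*} [MetricSpace X] [ProperSpace X]
    [MeasurableSpace X] [BorelSpace X] {μ : Measure X} [IsFiniteMeasureOnCompacts μ]
    {f : X → ℝ} (hf : Continuous f) {s : Set X} (hs : Bornology.IsBounded s) :
    MemLp f 2 (μ.restrict s) := by
  refine (memLp_two_iff_integrable_sq hf.aestronglyMeasurable).2 ?_
  exact ((hf.pow 2).continuousOn.integrableOn_compact hs.isCompact_closure).mono_set subset_closure

theorem absolutelyContinuousOnInterval_of_locallyLipschitz {X : Type*} [PseudoMetricSpace X]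
    {f : ℝ → X} (hf : LocallyLipschitz f)
    (a b : ℝ) : AbsolutelyContinuousOnInterval f a b :=
  (hf.locallyLipschitzOn.exists_lipschitzOnWith_of_compact
    isCompact_uIcc).choose_spec.absolutelyContinuousOnInterval

theorem setIntegral_Ioc_prod_Ioc_sq_le_of_locallyLipschitz {f : ℝ × ℝ → ℝ} {a b c d : ℝ}
    (hab : a ≤ b) (hcd : c < d) (hf : LocallyLipschitz f)
    (hf_edges : (∫ y in c..d, f (a, y)) + ∫ y in c..d, f (b, y) = 0) :
    ∫ p in Ioc a b ×ˢ Ioc c d, f p ^ 2 ≤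
      ((b - a) / π) ^ 2 * (∫ p in Ioc a b ×ˢ Ioc c d, lineDeriv ℝ f p (1, 0) ^ 2) +
        ((d - c) / π) ^ 2 * ∫ p in Ioc a b ×ˢ Ioc c d, lineDeriv ℝ f p (0, 1) ^ 2 := by
  have bounded : Bornology.IsBounded (Ioc a b ×ˢ Ioc c d) :=
    (Metric.isBounded_Ioc a b).prod (Metric.isBounded_Ioc c d)
  exact setIntegral_Ioc_prod_Ioc_sq_le hab hcd (memLp_two_of_continuous hf.continuous bounded)
    (fun y _ => absolutelyContinuousOnInterval_of_locallyLipschitz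
      (hf.comp (LipschitzWith.prodMk_right y).locallyLipschitz) a b)
    (fun x _ => absolutelyContinuousOnInterval_of_locallyLipschitz
      (hf.comp (LipschitzWith.prodMk_left x).locallyLipschitz) c d)
    (memLp_lineDeriv_of_locallyLipschitz hf bounded 2 _)
    (memLp_lineDeriv_of_locallyLipschitz hf bounded 2 _) hf_edges

end LocallyLipschitz

section DiagonalSymmetry

theorem prod_diagonal_eq_zero {α : Type*} [MeasurableSpace α] [MeasurableEq α]
    (μ ν : Measure α) [SFinite ν] [NullSingletonClass ν] : μ.prod ν (diagonal α) = 0 := by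
  have slice_eq (x : α) : Prod.mk x ⁻¹' diagonal α = {x} := by
    ext y
    exact eq_comm
  simp [Measure.prod_apply measurableSet_diagonal, slice_eq]

theorem setIntegral_prod_self_of_swap_eq {α F : Type*} [MeasurableSpace α] [LinearOrder α]
    [TopologicalSpace α] [OrderClosedTopology α] [SecondCountableTopology α]
    [OpensMeasurableSpace α] [NormedAddCommGroup F] [NormedSpace ℝ F] {μ : Measure α} [SFinite μ]
    [NullSingletonClass μ] {s : Set α} {φ : α × α → F} (hφ : IntegrableOn φ (s ×ˢ s) (μ.prod μ))
    (hφ_swap : ∀ p, φ p.swap = φ p) :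
    ∫ p in s ×ˢ s, φ p ∂μ.prod μ = (2 : ℝ) • ∫ p in s ×ˢ s ∩ {p | p.2 < p.1}, φ p ∂μ.prod μ := by
  have lower : MeasurableSet {p : α × α | p.2 < p.1} :=
    measurableSet_lt measurable_snd measurable_fst
  have upper_ae : (s ×ˢ s \ {p | p.2 < p.1} : Set (α × α)) =ᵐ[μ.prod μ]
      Prod.swap ⁻¹' (s ×ˢ s ∩ {p | p.2 < p.1}) := by
    rw [eventuallyEq_set]
    filter_upwards [measure_eq_zero_iff_ae_notMem.1 (prod_diagonal_eq_zero μ μ)] with p hp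
    have hne : p.1 ≠ p.2 := hp
    simp only [Set.mem_sdiff, mem_prod, mem_preimage, mem_inter_iff, mem_ofPred_eq,
      Prod.fst_swap, Prod.snd_swap, not_lt, hne.le_iff_lt]
    tauto
  have swap_eq : ∫ p in Prod.swap ⁻¹' (s ×ˢ s ∩ {p | p.2 < p.1}), φ p ∂μ.prod μ =
      ∫ p in s ×ˢ s ∩ {p | p.2 < p.1}, φ p ∂μ.prod μ := by
    simpa only [hφ_swap] using Measure.measurePreserving_swap.setIntegral_preimage_emb
      MeasurableEquiv.prodComm.measurableEmbedding φ (s ×ˢ s ∩ {p | p.2 < p.1})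
  rw [← integral_inter_add_sdiff lower hφ, setIntegral_congr_set upper_ae, swap_eq, two_smul]

theorem lineDeriv_swap_of_swap_eq {E F : Type*} [NormedAddCommGroup E] [NormedSpace ℝ E]
    [NormedAddCommGroup F] [NormedSpace ℝ F] {f : E × E → F} (hf : ∀ p, f p.swap = f p)
    (p v : E × E) : lineDeriv ℝ f p.swap v.swap = lineDeriv ℝ f p v := by
  simp only [lineDeriv]
  congr with t
  exact hf (p + t • v)

/-- The reflection of the plane onto the half-plane below the diagonal. Composing a function with it
extends the function evenly across the diagonal. -/
def foldDiagonal (p : ℝ × ℝ) : ℝ × ℝ := (max p.1 p.2, min p.1 p.2)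

theorem foldDiagonal_swap (p : ℝ × ℝ) : foldDiagonal p.swap = foldDiagonal p :=
  Prod.ext (max_comm _ _) (min_comm _ _)

theorem foldDiagonal_of_le {p : ℝ × ℝ} (hp : p.2 ≤ p.1) : foldDiagonal p = p :=
  Prod.ext (max_eq_left hp) (min_eq_right hp)

theorem locallyLipschitz_foldDiagonal : LocallyLipschitz foldDiagonal :=
  (lipschitzWith_max.prodMk lipschitzWith_min).locallyLipschitz

theorem foldDiagonal_eventuallyEq_id {p : ℝ × ℝ} (hp : p.2 < p.1) :
    foldDiagonal =ᶠ[𝓝 p] id := by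
  filter_upwards [(isOpen_lt continuous_snd continuous_fst).mem_nhds hp] with q hq
  exact foldDiagonal_of_le (le_of_lt hq)

theorem lineDeriv_comp_foldDiagonal {F : Type*} [NormedAddCommGroup F] [NormedSpace ℝ F]
    (f : ℝ × ℝ → F) {p : ℝ × ℝ} (hp : p.2 < p.1) (v : ℝ × ℝ) :
    lineDeriv ℝ (f ∘ foldDiagonal) p v = lineDeriv ℝ f p v :=
  ((foldDiagonal_eventuallyEq_id hp).fun_comp f).lineDeriv_eq

end DiagonalSymmetry

section Triangle

variable {h : ℝ}

/-- The open isosceles right triangle `0 < x₂ < x₁ < h`, with legs on `x₁ = h` and `x₂ = 0`. -/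
def rightTriangle (h : ℝ) : Set (ℝ × ℝ) := {p | 0 < p.2 ∧ p.2 < p.1 ∧ p.1 < h}

theorem rightTriangle_eq_inter :
    rightTriangle h = Ioo 0 h ×ˢ Ioo 0 h ∩ {p | p.2 < p.1} := by
  ext p
  simp only [rightTriangle, mem_ofPred_eq, mem_inter_iff, mem_prod, mem_Ioo]
  grind

theorem measurableSet_rightTriangle : MeasurableSet (rightTriangle h) := by
  rw [rightTriangle_eq_inter]
  exact (measurableSet_Ioo.prod measurableSet_Ioo).inter
    (measurableSet_lt measurable_snd measurable_fst)

theorem setIntegral_square_eq_two_mul_rightTriangle {φ : ℝ × ℝ → ℝ}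
    (hφ : IntegrableOn φ (Ioc 0 h ×ˢ Ioc 0 h)) (hφ_swap : ∀ p, φ p.swap = φ p) :
    ∫ p in Ioc 0 h ×ˢ Ioc 0 h, φ p = 2 * ∫ p in rightTriangle h, φ p := by
  have square_ae : (Ioo 0 h ×ˢ Ioo 0 h : Set (ℝ × ℝ)) =ᵐ[volume] Ioc 0 h ×ˢ Ioc 0 h :=
    Measure.set_prod_ae_eq Ioo_ae_eq_Ioc Ioo_ae_eq_Ioc
  rw [← setIntegral_congr_set square_ae, rightTriangle_eq_inter]
  exact setIntegral_prod_self_of_swap_eq (hφ.congr_set_ae square_ae) hφ_swap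

theorem integral_foldDiagonal_edges (hh : 0 ≤ h) (u : ℝ × ℝ → ℝ) :
    (∫ y in (0 : ℝ)..h, u (foldDiagonal (0, y))) + ∫ y in (0 : ℝ)..h, u (foldDiagonal (h, y)) =
      (∫ t in (0 : ℝ)..h, u (h, t)) + ∫ s in (0 : ℝ)..h, u (s, 0) := by
  rw [add_comm]
  congr 1 <;> refine intervalIntegral.integral_congr fun y hy => congrArg u ?_ <;>
    rw [uIcc_of_le hh] at hy
  · exact foldDiagonal_of_le hy.2
  · rw [← foldDiagonal_swap]
    exact foldDiagonal_of_le hy.1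

theorem setIntegral_rightTriangle_sq_le_of_swap_eq (hh : 0 < h) {u : ℝ × ℝ → ℝ}
    (hu : LocallyLipschitz u) (hu_swap : ∀ p, u p.swap = u p)
    (hu_edges : (∫ y in (0 : ℝ)..h, u (0, y)) + ∫ y in (0 : ℝ)..h, u (h, y) = 0) :
    ∫ p in rightTriangle h, u p ^ 2 ≤ (h / π) ^ 2 *
      ∫ p in rightTriangle h, (lineDeriv ℝ u p (1, 0) ^ 2 + lineDeriv ℝ u p (0, 1) ^ 2) := by
  have bounded : Bornology.IsBounded (Ioc 0 h ×ˢ Ioc 0 h) :=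
    (Metric.isBounded_Ioc 0 h).prod (Metric.isBounded_Ioc 0 h)
  have sq_int : IntegrableOn (fun p => u p ^ 2) (Ioc 0 h ×ˢ Ioc 0 h) :=
    (memLp_two_of_continuous hu.continuous bounded).integrable_sq
  have deriv_int (v : ℝ × ℝ) :
      IntegrableOn (fun p => lineDeriv ℝ u p v ^ 2) (Ioc 0 h ×ˢ Ioc 0 h) :=
    (memLp_lineDeriv_of_locallyLipschitz hu bounded 2 v).integrable_sq
  have deriv_swap (p : ℝ × ℝ) :
      lineDeriv ℝ u p.swap (1, 0) ^ 2 + lineDeriv ℝ u p.swap (0, 1) ^ 2 =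
        lineDeriv ℝ u p (1, 0) ^ 2 + lineDeriv ℝ u p (0, 1) ^ 2 := by
    rw [add_comm, ← lineDeriv_swap_of_swap_eq hu_swap p, ← lineDeriv_swap_of_swap_eq hu_swap p]
    rfl
  have square := setIntegral_Ioc_prod_Ioc_sq_le_of_locallyLipschitz hh.le hh hu hu_edges
  rw [sub_zero, ← mul_add, ← integral_add (deriv_int _) (deriv_int _),
    setIntegral_square_eq_two_mul_rightTriangle sq_int fun p => by rw [hu_swap],
    setIntegral_square_eq_two_mul_rightTriangle
      (φ := fun p => lineDeriv ℝ u p (1, 0) ^ 2 + lineDeriv ℝ u p (0, 1) ^ 2)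
      ((deriv_int _).add (deriv_int _)) deriv_swap] at square
  linarith

theorem setIntegral_rightTriangle_sq_le (hh : 0 < h) {u : ℝ × ℝ → ℝ} (hu : LocallyLipschitz u)
    (hu_legs : (∫ t in (0 : ℝ)..h, u (h, t)) + ∫ s in (0 : ℝ)..h, u (s, 0) = 0) :
    ∫ p in rightTriangle h, u p ^ 2 ≤ (h / π) ^ 2 *
      ∫ p in rightTriangle h, (lineDeriv ℝ u p (1, 0) ^ 2 + lineDeriv ℝ u p (0, 1) ^ 2) := by
  have folded := setIntegral_rightTriangle_sq_le_of_swap_eq hh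
    (hu.comp locallyLipschitz_foldDiagonal) (fun p => congrArg u (foldDiagonal_swap p))
    ((integral_foldDiagonal_edges hh.le u).trans hu_legs)
  convert folded using 1
  · refine setIntegral_congr_fun measurableSet_rightTriangle fun p hp => ?_
    simp only [Function.comp_apply, foldDiagonal_of_le hp.2.1.le]
  · congr 1
    refine setIntegral_congr_fun measurableSet_rightTriangle fun p hp => ?_
    simp only [lineDeriv_comp_foldDiagonal u hp.2.1]

end Triangle

section Extremal

variable {h : ℝ} {φ : ℝ → ℝ}

theorem integrableOn_rightTriangle {ψ : ℝ × ℝ → ℝ} (hψ : Continuous ψ) :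
    IntegrableOn ψ (rightTriangle h) := by
  refine (hψ.continuousOn.integrableOn_compact
    (isCompact_Icc.prod isCompact_Icc : IsCompact (Icc 0 h ×ˢ Icc 0 h))).mono_set fun p hp => ?_
  exact ⟨⟨(hp.1.trans hp.2.1).le, hp.2.2.le⟩, hp.1.le, (hp.2.1.trans hp.2.2).le⟩

theorem setIntegral_rightTriangle_eq_of_swap_eq (hh : 0 ≤ h) {ψ : ℝ × ℝ → ℝ} (hψ : Continuous ψ)
    (hψ_swap : ∀ p, ψ p.swap = ψ p) :
    ∫ p in rightTriangle h, ψ p = (∫ x in (0 : ℝ)..h, ∫ y in (0 : ℝ)..h, ψ (x, y)) / 2 := by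
  have hψ_int : IntegrableOn ψ (Ioc 0 h ×ˢ Ioc 0 h) :=
    (hψ.continuousOn.integrableOn_compact (isCompact_Icc.prod isCompact_Icc)).mono_set
      (prod_mono Ioc_subset_Icc_self Ioc_subset_Icc_self)
  rw [← setIntegral_Ioc_prod_Ioc hh hh hψ_int,
    setIntegral_square_eq_two_mul_rightTriangle hψ_int hψ_swap]
  ring

theorem setIntegral_rightTriangle_fst_add_snd (hh : 0 ≤ h) (hφ : Continuous φ) :
    ∫ p in rightTriangle h, (φ p.1 + φ p.2) = h * ∫ x in (0 : ℝ)..h, φ x := by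
  rw [setIntegral_rightTriangle_eq_of_swap_eq hh (by fun_prop) fun p => add_comm _ _]
  have hφ_int : IntervalIntegrable φ volume 0 h := hφ.intervalIntegrable 0 h
  have inner (x : ℝ) : ∫ y in (0 : ℝ)..h, (φ x + φ y) = h * φ x + ∫ y in (0 : ℝ)..h, φ y := by
    simp [intervalIntegral.integral_add intervalIntegrable_const hφ_int]
  simp only [inner, intervalIntegral.integral_add (hφ_int.const_mul h) intervalIntegrable_const,
    intervalIntegral.integral_const_mul, intervalIntegral.integral_const, sub_zero, smul_eq_mul]
  ring

theorem setIntegral_rightTriangle_fst_mul_snd (hh : 0 ≤ h) (hφ : Continuous φ) :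
    ∫ p in rightTriangle h, φ p.1 * φ p.2 = (∫ x in (0 : ℝ)..h, φ x) ^ 2 / 2 := by
  rw [setIntegral_rightTriangle_eq_of_swap_eq hh (by fun_prop) fun p => mul_comm _ _]
  simp only [intervalIntegral.integral_const_mul, intervalIntegral.integral_mul_const, sq]

theorem setIntegral_rightTriangle_fst_add_snd_sq (hh : 0 ≤ h) (hφ : Continuous φ)
    (hφ_mean : ∫ x in (0 : ℝ)..h, φ x = 0) :
    ∫ p in rightTriangle h, (φ p.1 + φ p.2) ^ 2 = h * ∫ x in (0 : ℝ)..h, φ x ^ 2 := by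
  have expand (p : ℝ × ℝ) :
      (φ p.1 + φ p.2) ^ 2 = φ p.1 ^ 2 + φ p.2 ^ 2 + 2 * (φ p.1 * φ p.2) := by ring
  simp only [expand]
  rw [integral_add (integrableOn_rightTriangle (by fun_prop))
      (integrableOn_rightTriangle (by fun_prop)), integral_const_mul,
    setIntegral_rightTriangle_fst_add_snd (φ := fun x => φ x ^ 2) hh (hφ.pow 2),
    setIntegral_rightTriangle_fst_mul_snd hh hφ, hφ_mean]
  ring

theorem setIntegral_rightTriangle_lineDeriv_fst_add_snd (hh : 0 ≤ h) (hφ : ContDiff ℝ 1 φ) :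
    ∫ p in rightTriangle h, (lineDeriv ℝ (fun p => φ p.1 + φ p.2) p (1, 0) ^ 2 +
        lineDeriv ℝ (fun p => φ p.1 + φ p.2) p (0, 1) ^ 2) =
      h * ∫ x in (0 : ℝ)..h, deriv φ x ^ 2 := by
  have fst_deriv : ∀ p, lineDeriv ℝ (fun p : ℝ × ℝ => φ p.1 + φ p.2) p (1, 0) = deriv φ p.1 :=
    fun p => (lineDeriv_one_zero _ p.1 p.2).trans (deriv_add_const (φ p.2))
  have snd_deriv : ∀ p, lineDeriv ℝ (fun p : ℝ × ℝ => φ p.1 + φ p.2) p (0, 1) = deriv φ p.2 :=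
    fun p => (lineDeriv_zero_one _ p.1 p.2).trans (deriv_const_add (φ p.1))
  simp only [fst_deriv, snd_deriv]
  exact setIntegral_rightTriangle_fst_add_snd (φ := fun x => deriv φ x ^ 2) hh
    (hφ.continuous_deriv_one.pow 2)

theorem integral_cos_pi_div_mul (hh : h ≠ 0) : ∫ x in (0 : ℝ)..h, cos (π / h * x) = 0 := by
  simp [intervalIntegral.integral_comp_mul_left (fun x => cos x) (div_ne_zero pi_ne_zero hh), hh]

theorem integral_cos_pi_div_mul_sq (hh : h ≠ 0) :
    ∫ x in (0 : ℝ)..h, cos (π / h * x) ^ 2 = h / 2 := by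
  rw [intervalIntegral.integral_comp_mul_left (fun x => cos x ^ 2) (div_ne_zero pi_ne_zero hh)]
  rw [integral_cos_sq, div_mul_cancel₀ π hh, mul_zero, sin_pi, sin_zero, smul_eq_mul]
  field_simp
  ring

theorem integral_deriv_cos_pi_div_mul_sq (hh : h ≠ 0) :
    ∫ x in (0 : ℝ)..h, deriv (fun x => cos (π / h * x)) x ^ 2 = (π / h) ^ 2 * (h / 2) := by
  have deriv_sq (x : ℝ) :
      deriv (fun x => cos (π / h * x)) x ^ 2 = (π / h) ^ 2 * sin (π / h * x) ^ 2 := by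
    rw [((hasDerivAt_id' x).const_mul (π / h)).cos.deriv]
    ring
  simp only [deriv_sq, intervalIntegral.integral_const_mul]
  rw [intervalIntegral.integral_comp_mul_left (fun x => sin x ^ 2) (div_ne_zero pi_ne_zero hh)]
  rw [integral_sin_sq, div_mul_cancel₀ π hh, mul_zero, sin_pi, sin_zero, smul_eq_mul]
  field_simp
  ring

end Extremal

section Euclidean

variable {h : ℝ}

theorem setIntegral_euclidean_eq_prod {F : Type*} [NormedAddCommGroup F] [NormedSpace ℝ F]
    (S : Set (ℝ × ℝ)) (ψ : EuclideanSpace ℝ (Fin 2) → F) :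
    ∫ x in {x : EuclideanSpace ℝ (Fin 2) | (x 0, x 1) ∈ S}, ψ x = ∫ p in S, ψ !₂[p.1, p.2] := by
  have coords := (EuclideanSpace.volume_preserving_symm_measurableEquiv_toLp (Fin 2)).trans
    (volume_preserving_finTwoArrow ℝ)
  have vec_coords (x : EuclideanSpace ℝ (Fin 2)) : !₂[x 0, x 1] = x := by
    ext i
    fin_cases i <;> rfl
  rw [← coords.setIntegral_preimage_emb (MeasurableEquiv.measurableEmbedding _)]
  exact congrArg _ (funext fun x => (congrArg ψ (vec_coords x)).symm)

theorem lineDeriv_euclidean_eq_prod {F : Type*} [NormedAddCommGroup F] [NormedSpace ℝ F]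
    (w : EuclideanSpace ℝ (Fin 2) → F) (p v : ℝ × ℝ) :
    lineDeriv ℝ w !₂[p.1, p.2] !₂[v.1, v.2] = lineDeriv ℝ (fun q => w !₂[q.1, q.2]) p v := by
  simp only [lineDeriv]
  congr with t
  congr with i
  fin_cases i <;> simp

theorem norm_gradient_sq_eq_sum_lineDeriv {ι : Type*} [Fintype ι] [DecidableEq ι]
    {w : EuclideanSpace ℝ ι → ℝ}
    {x : EuclideanSpace ℝ ι} (hw : DifferentiableAt ℝ w x) :
    ‖gradient w x‖ ^ 2 = ∑ i, lineDeriv ℝ w x (EuclideanSpace.single i 1) ^ 2 := by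
  rw [EuclideanSpace.norm_sq_eq]
  refine Finset.sum_congr rfl fun i _ => ?_
  rw [hw.lineDeriv_eq_fderiv, ← inner_gradient_left, EuclideanSpace.inner_single_right]
  simp

theorem norm_gradient_sq_eq_lineDeriv_prod {w : EuclideanSpace ℝ (Fin 2) → ℝ}
    (hw : Differentiable ℝ w) (p : ℝ × ℝ) :
    ‖gradient w !₂[p.1, p.2]‖ ^ 2 = lineDeriv ℝ (fun q => w !₂[q.1, q.2]) p (1, 0) ^ 2 +
      lineDeriv ℝ (fun q => w !₂[q.1, q.2]) p (0, 1) ^ 2 := by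
  have single_zero : EuclideanSpace.single (0 : Fin 2) (1 : ℝ) = !₂[1, 0] := by
    ext i
    fin_cases i <;> simp
  have single_one : EuclideanSpace.single (1 : Fin 2) (1 : ℝ) = !₂[0, 1] := by
    ext i
    fin_cases i <;> simp
  rw [norm_gradient_sq_eq_sum_lineDeriv hw.differentiableAt, Fin.sum_univ_two, single_zero,
    single_one, ← lineDeriv_euclidean_eq_prod, ← lineDeriv_euclidean_eq_prod]

theorem contDiff_vec_two : ContDiff ℝ 1 fun p : ℝ × ℝ => !₂[p.1, p.2] := by
  rw [contDiff_euclidean]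
  intro i
  fin_cases i
  exacts [contDiff_fst, contDiff_snd]

theorem setIntegral_sq_le_norm_gradient (hh : 0 < h) {w : EuclideanSpace ℝ (Fin 2) → ℝ}
    (hw : ContDiff ℝ 1 w)
    (hw_legs : (∫ t in (0 : ℝ)..h, w !₂[h, t]) + ∫ s in (0 : ℝ)..h, w !₂[s, 0] = 0) :
    ∫ x in {x | (x 0, x 1) ∈ rightTriangle h}, w x ^ 2 ≤
      (h / π) ^ 2 * ∫ x in {x | (x 0, x 1) ∈ rightTriangle h}, ‖gradient w x‖ ^ 2 := by
  simp only [setIntegral_euclidean_eq_prod,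
    norm_gradient_sq_eq_lineDeriv_prod (hw.differentiable one_ne_zero)]
  exact setIntegral_rightTriangle_sq_le hh (hw.comp contDiff_vec_two).locallyLipschitz hw_legs

theorem exists_setIntegral_sq_eq_norm_gradient (hh : 0 < h) :
    ∃ w : EuclideanSpace ℝ (Fin 2) → ℝ, ContDiff ℝ 1 w ∧
      (∫ t in (0 : ℝ)..h, w !₂[h, t]) + (∫ s in (0 : ℝ)..h, w !₂[s, 0]) = 0 ∧
      0 < ∫ x in {x | (x 0, x 1) ∈ rightTriangle h}, ‖gradient w x‖ ^ 2 ∧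
      ∫ x in {x | (x 0, x 1) ∈ rightTriangle h}, w x ^ 2 =
        (h / π) ^ 2 * ∫ x in {x | (x 0, x 1) ∈ rightTriangle h}, ‖gradient w x‖ ^ 2 := by
  set φ : ℝ → ℝ := fun x => cos (π / h * x) with hφ_def
  have hφ : ContDiff ℝ 1 φ := by fun_prop
  have hφ_mean : ∫ x in (0 : ℝ)..h, φ x = 0 := integral_cos_pi_div_mul hh.ne'
  set w : EuclideanSpace ℝ (Fin 2) → ℝ := fun x => φ (x 0) + φ (x 1)
  have hw : ContDiff ℝ 1 w := by fun_prop
  have energy : ∫ x in {x | (x 0, x 1) ∈ rightTriangle h}, ‖gradient w x‖ ^ 2 =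
      h * ((π / h) ^ 2 * (h / 2)) := by
    simp only [setIntegral_euclidean_eq_prod,
      norm_gradient_sq_eq_lineDeriv_prod (hw.differentiable one_ne_zero)]
    rw [← integral_deriv_cos_pi_div_mul_sq hh.ne']
    exact setIntegral_rightTriangle_lineDeriv_fst_add_snd hh.le hφ
  have mass : ∫ x in {x | (x 0, x 1) ∈ rightTriangle h}, w x ^ 2 = h * (h / 2) := by
    rw [setIntegral_euclidean_eq_prod, ← integral_cos_pi_div_mul_sq hh.ne']
    exact setIntegral_rightTriangle_fst_add_snd_sq hh.le hφ.continuous hφ_mean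
  have hφ_int : IntervalIntegrable φ volume 0 h := hφ.continuous.intervalIntegrable 0 h
  have φ_endpoints : φ h + φ 0 = 0 := by simp [hφ_def, hh.ne']
  refine ⟨w, hw, ?_, ?_, ?_⟩
  · have vertical : ∫ t in (0 : ℝ)..h, w !₂[h, t] = h * φ h := by
      simp [w, intervalIntegral.integral_add intervalIntegrable_const hφ_int, hφ_mean]
    have horizontal : ∫ s in (0 : ℝ)..h, w !₂[s, 0] = h * φ 0 := by
      simp [w, intervalIntegral.integral_add hφ_int intervalIntegrable_const, hφ_mean]
    rw [vertical, horizontal, ← mul_add, φ_endpoints, mul_zero]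
  · rw [energy]
    positivity
  · rw [mass, energy]
    field_simp

end Euclidean

/-- The sharp constant `C₁(Ω,Γ)` in `‖w‖_{L²(Ω)} ≤ C₁ ‖∇w‖_{L²(Ω)}` for functions
with zero mean trace on `Γ`, where `Ω = {0 < x₂ < x₁ < h}` is an isosceles right
triangle and `Γ` is the union of the two legs
`{x₁ = h, x₂ ∈ [0,h]} ∪ {x₂ = 0, x₁ ∈ [0,h]}`, equals `h/π`. -/
theorem triangle_two_legs_C1 (h : ℝ) (hh : 0 < h) :
    IsLeast {C : ℝ |
      ∀ w : EuclideanSpace ℝ (Fin 2) → ℝ, ContDiff ℝ 1 w →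
        ((∫ t in (0:ℝ)..h, w !₂[h, t]) + (∫ s in (0:ℝ)..h, w !₂[s, 0])) = 0 →
        Real.sqrt (∫ x in {x : EuclideanSpace ℝ (Fin 2) |
            0 < x 1 ∧ x 1 < x 0 ∧ x 0 < h}, (w x) ^ 2) ≤
          C * Real.sqrt (∫ x in {x : EuclideanSpace ℝ (Fin 2) |
            0 < x 1 ∧ x 1 < x 0 ∧ x 0 < h}, ‖gradient w x‖ ^ 2)}
      (h / π) := by
  have sqrt_mul_energy (E : ℝ) : √((h / π) ^ 2 * E) = h / π * √E := by
    rw [sqrt_mul (sq_nonneg _), sqrt_sq (by positivity)]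
  constructor
  · intro w hw hw_legs
    rw [← sqrt_mul_energy]
    exact sqrt_le_sqrt (setIntegral_sq_le_norm_gradient hh hw hw_legs)
  · intro C hC
    obtain ⟨w, hw, hw_legs, energy_pos, equality⟩ := exists_setIntegral_sq_eq_norm_gradient hh
    refine le_of_mul_le_mul_right ?_ (sqrt_pos.2 energy_pos)
    rw [← sqrt_mul_energy, ← equality]
    exact hC w hw hw_legs
end

section
/- Let Ω = {(x₁,x₂) ∈ ℝ² : 0 < x₂ < x₁ < h} be an isosceles right triangle with legs of length h > 0, and let Γ = {x₁ = h, x₂ ∈ [0,h]} ∪ {x₂ = 0, x₁ ∈ [0,h]} be the union of the two legs. Let z₀ be the unique root of the equation tanh(z)·tan(z) = 1 in the interval (0, π/2) (z₀ ≈ 0.93755). Then the sharp constant C₂(Ω,Γ) in the inequality ‖w‖_{L²(Γ)} ≤ C₂‖∇w‖_{L²(Ω)} for all w ∈ H̃¹(Ω,Γ) is equal to ( (2z₀/h)·tanh(z₀) )^{-1/2}. -/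
open MeasureTheory Real

/-!
After scaling, the triangle is `-1 < y < x < 1` and the claim is that `z₀ tanh z₀` is the smallest
nonzero Steklov eigenvalue on the legs. Reflection in the axis `x + y = 0` splits a function into an
odd and an even part, and both are estimated on the half `|y| < x < 1`.

The odd part vanishes on the axis. The harmonic function
`sin (z₀ x) cosh (z₀ y) + cosh (z₀ x) sin (z₀ y)` is odd and positive in the half triangle, has zero
normal derivative on the hypotenuse, and, because `tanh z₀ * tan z₀ = 1`, has normal derivative
`z₀ tanh z₀` times itself on the legs. Picone's inequality with this function gives the bound
`z₀ tanh z₀`, with equality for the function itself.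

The even part has mean zero on the leg `x = 1`. Testing its gradient against a divergence-free field
which is homogeneous of degree one reduces the bound to a weighted Poincaré inequality on an
interval and gives the constant `1`, which is larger: `z₀ tanh z₀ = z₀ / tan z₀ < 1`.
-/

section TriangleTrace

open Set Filter Topology

lemma continuous_sq_div_sub {G : ℝ → ℝ} {a : ℝ} (hG : Differentiable ℝ G) (ha : G a = 0) :
    Continuous fun t ↦ G t ^ 2 / (t - a) := by
  have hslope : (fun t ↦ G t ^ 2 / (t - a)) = fun t ↦ G t * dslope G a t := by
    ext t
    obtain rfl | hne := eq_or_ne t a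
    · simp [ha]
    · rw [dslope_of_ne _ hne, slope_def_field, ha]
      ring
  rw [hslope]
  refine hG.continuous.mul (continuous_iff_continuousAt.2 fun t ↦ ?_)
  obtain rfl | hne := eq_or_ne t a
  · exact continuousAt_dslope_same.2 (hG t)
  · exact (continuousAt_dslope_of_ne hne).2 hG.continuous.continuousAt

lemma integral_mul_sq_le_of_riccati {a b : ℝ} (hab : a ≤ b) {G g p q r r' : ℝ → ℝ}
    (hG : ∀ t ∈ Ioo a b, HasDerivAt G (g t) t) (hr : ∀ t ∈ Ioo a b, HasDerivAt r (r' t) t)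
    (hp : ∀ t ∈ Ioo a b, 0 < p t) (hriccati : ∀ t ∈ Ioo a b, r' t + q t + r t ^ 2 / p t ≤ 0)
    (hcont : ContinuousOn (fun t ↦ G t ^ 2 * r t) (Icc a b)) (ha : G a = 0) (hb : G b = 0)
    (hpg : IntervalIntegrable (fun t ↦ p t * g t ^ 2) volume a b)
    (hqG : IntervalIntegrable (fun t ↦ q t * G t ^ 2) volume a b) :
    ∫ t in a..b, q t * G t ^ 2 ≤ ∫ t in a..b, p t * g t ^ 2 := by
  have hderiv (t : ℝ) (ht : t ∈ Ioo a b) :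
      HasDerivAt (fun t ↦ G t ^ 2 * r t) (2 * G t * g t * r t + G t ^ 2 * r' t) t := by
    simpa using ((hG t ht).fun_pow 2).fun_mul (hr t ht)
  have hbound (t : ℝ) (ht : t ∈ Ioo a b) :
      2 * G t * g t * r t + G t ^ 2 * r' t ≤ p t * g t ^ 2 - q t * G t ^ 2 := by
    have hsquare : p t * (g t - G t * r t / p t) ^ 2 =
        p t * g t ^ 2 - 2 * G t * g t * r t + G t ^ 2 * (r t ^ 2 / p t) := by
      field_simp [(hp t ht).ne']
      ring
    have hnonneg : 0 ≤ p t * (g t - G t * r t / p t) ^ 2 := by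
      have := hp t ht
      positivity
    linarith [mul_nonpos_of_nonneg_of_nonpos (sq_nonneg (G t)) (hriccati t ht)]
  have hint := (intervalIntegrable_iff_integrableOn_Icc_of_le hab).1 (hpg.sub hqG)
  have hle := intervalIntegral.sub_le_integral_of_hasDeriv_right_of_le hab hcont
    (fun t ht ↦ (hderiv t ht).hasDerivWithinAt) hint hbound
  rw [intervalIntegral.integral_sub hpg hqG, ha, hb] at hle
  linarith

/- `φ = 1 - t ^ 2` is a positive solution of `d/dt ((3 - t ^ 2) dφ/dt) + 6 φ = 0` that vanishes at
both ends, so the constant `6` is optimal; `r` below is `(3 - t ^ 2) (dφ/dt) / φ`. -/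
lemma integral_six_mul_sq_le {G g : ℝ → ℝ} (hg : Continuous g)
    (hG : ∀ t, HasDerivAt G (g t) t) (hneg : G (-1) = 0) (hpos : G 1 = 0) :
    ∫ t in (-1 : ℝ)..1, 6 * G t ^ 2 ≤ ∫ t in (-1 : ℝ)..1, (3 - t ^ 2) * g t ^ 2 := by
  have hGd : Differentiable ℝ G := fun t ↦ (hG t).differentiableAt
  have hGc : Continuous G := hGd.continuous
  let r : ℝ → ℝ := fun t ↦ (3 - t ^ 2) * ((t - 1)⁻¹ + (t + 1)⁻¹)
  let r' : ℝ → ℝ := fun t ↦ -2 * t * ((t - 1)⁻¹ + (t + 1)⁻¹) +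
    (3 - t ^ 2) * (-1 / (t - 1) ^ 2 + -1 / (t + 1) ^ 2)
  have hne {t : ℝ} (ht : t ∈ Ioo (-1 : ℝ) 1) : t - 1 ≠ 0 ∧ t + 1 ≠ 0 :=
    ⟨by linarith [ht.2], by linarith [ht.1]⟩
  have hr (t : ℝ) (ht : t ∈ Ioo (-1 : ℝ) 1) : HasDerivAt r (r' t) t := by
    have hinv₁ := ((hasDerivAt_id t).sub_const 1).fun_inv (hne ht).1
    have hinv₂ := ((hasDerivAt_id t).add_const 1).fun_inv (hne ht).2
    simpa [r, r'] using (((hasDerivAt_id t).fun_pow 2).const_sub 3).fun_mul (hinv₁.fun_add hinv₂)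
  have hp (t : ℝ) (ht : t ∈ Ioo (-1 : ℝ) 1) : 0 < 3 - t ^ 2 := by nlinarith [ht.1, ht.2]
  have hriccati (t : ℝ) (ht : t ∈ Ioo (-1 : ℝ) 1) : r' t + 6 + r t ^ 2 / (3 - t ^ 2) ≤ 0 := by
    obtain ⟨hne₁, hne₂⟩ := hne ht
    have hpne := (hp t ht).ne'
    refine le_of_eq ?_
    simp only [r, r']
    field_simp [hpne]
    ring
  have hcont : Continuous fun t ↦ G t ^ 2 * r t := by
    have hsum := (continuous_sq_div_sub hGd hpos).add (continuous_sq_div_sub hGd hneg)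
    have hmul : Continuous fun t ↦
        (3 - t ^ 2) * (G t ^ 2 / (t - 1) + G t ^ 2 / (t - -1)) :=
      (by fun_prop : Continuous fun t : ℝ ↦ 3 - t ^ 2).mul hsum
    convert! hmul using 2 with t
    simp only [r, sub_neg_eq_add]
    ring
  exact integral_mul_sq_le_of_riccati (by norm_num) (fun t _ ↦ hG t) hr hp hriccati
    hcont.continuousOn hneg hpos
    (Continuous.intervalIntegrable (by fun_prop) _ _)
    (Continuous.intervalIntegrable (by fun_prop) _ _)

lemma integral_sq_add_two_mul_mul_deriv_eq_zero {G g : ℝ → ℝ} (hg : Continuous g)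
    (hG : ∀ t, HasDerivAt G (g t) t) (hneg : G (-1) = 0) (hpos : G 1 = 0) :
    ∫ t in (-1 : ℝ)..1, (G t ^ 2 + 2 * t * G t * g t) = 0 := by
  have hGc : Continuous G := continuous_iff_continuousAt.2 fun t ↦ (hG t).continuousAt
  have hderiv (t : ℝ) :
      HasDerivAt (fun t ↦ t * G t ^ 2) (G t ^ 2 + 2 * t * G t * g t) t := by
    convert! (hasDerivAt_id t).mul ((hG t).pow 2) using 1
    simp
    ring
  rw [intervalIntegral.integral_eq_sub_of_hasDerivAt (fun t _ ↦ hderiv t)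
    (Continuous.intervalIntegrable (by fun_prop) _ _), hneg, hpos]
  norm_num

lemma integral_sq_add_sq_le_four_mul {G g : ℝ → ℝ} (hg : Continuous g)
    (hG : ∀ t, HasDerivAt G (g t) t) (hneg : G (-1) = 0) (hpos : G 1 = 0) :
    ∫ t in (-1 : ℝ)..1, (g t ^ 2 + (t * g t - 2 * G t) ^ 2) ≤
      4 * ∫ t in (-1 : ℝ)..1, g t ^ 2 := by
  have hGc : Continuous G := continuous_iff_continuousAt.2 fun t ↦ (hG t).continuousAt
  have hint {k : ℝ → ℝ} (hk : Continuous k) : IntervalIntegrable k volume (-1) 1 :=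
    hk.intervalIntegrable _ _
  have hsplit : ∫ t in (-1 : ℝ)..1, (g t ^ 2 + (t * g t - 2 * G t) ^ 2) =
      4 * (∫ t in (-1 : ℝ)..1, g t ^ 2) - (∫ t in (-1 : ℝ)..1, (3 - t ^ 2) * g t ^ 2) +
        (∫ t in (-1 : ℝ)..1, 6 * G t ^ 2) -
        2 * ∫ t in (-1 : ℝ)..1, (G t ^ 2 + 2 * t * G t * g t) := by
    rw [← intervalIntegral.integral_const_mul, ← intervalIntegral.integral_const_mul,
      ← intervalIntegral.integral_sub (hint (by fun_prop)) (hint (by fun_prop)),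
      ← intervalIntegral.integral_add (hint (by fun_prop)) (hint (by fun_prop)),
      ← intervalIntegral.integral_sub (hint (by fun_prop)) (hint (by fun_prop))]
    congr 1 with t
    ring
  rw [hsplit, integral_sq_add_two_mul_mul_deriv_eq_zero hg hG hneg hpos]
  linarith [integral_six_mul_sq_le hg hG hneg hpos]

/-- The partial derivative `∂f/∂x` of a function of two real variables. -/
noncomputable def partialFst (f : ℝ × ℝ → ℝ) (p : ℝ × ℝ) : ℝ := fderiv ℝ f p (1, 0)

/-- The partial derivative `∂f/∂y` of a function of two real variables. -/
noncomputable def partialSnd (f : ℝ × ℝ → ℝ) (p : ℝ × ℝ) : ℝ := fderiv ℝ f p (0, 1)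

/-- The squared Euclidean length `|∇f|²` of the gradient. It is written with partial derivatives
because the norm of `ℝ × ℝ` is the sup norm. -/
noncomputable def gradSq (f : ℝ × ℝ → ℝ) (p : ℝ × ℝ) : ℝ := partialFst f p ^ 2 + partialSnd f p ^ 2

/-- The Dirichlet energy `∫_S |∇f|²`. -/
noncomputable def dirichletEnergy (S : Set (ℝ × ℝ)) (f : ℝ × ℝ → ℝ) : ℝ := ∫ p in S, gradSq f p

section Partial

variable {f g : ℝ × ℝ → ℝ} {p : ℝ × ℝ}

lemma fderiv_apply_eq_partial (f : ℝ × ℝ → ℝ) (p v : ℝ × ℝ) :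
    fderiv ℝ f p v = v.1 * partialFst f p + v.2 * partialSnd f p := by
  have hv : v = v.1 • ((1 : ℝ), (0 : ℝ)) + v.2 • ((0 : ℝ), (1 : ℝ)) := by ext <;> simp
  conv_lhs => rw [hv, map_add, map_smul, map_smul]
  rfl

lemma hasDerivAt_partialFst (hf : DifferentiableAt ℝ f p) :
    HasDerivAt (fun x ↦ f (x, p.2)) (partialFst f p) p.1 :=
  HasFDerivAt.comp_hasDerivAt (f := fun x ↦ (x, p.2)) p.1 hf.hasFDerivAt
    ((hasDerivAt_id _).prodMk (hasDerivAt_const _ _))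

lemma hasDerivAt_partialSnd (hf : DifferentiableAt ℝ f p) :
    HasDerivAt (fun y ↦ f (p.1, y)) (partialSnd f p) p.2 :=
  HasFDerivAt.comp_hasDerivAt (f := fun y ↦ (p.1, y)) p.2 hf.hasFDerivAt
    ((hasDerivAt_const _ _).prodMk (hasDerivAt_id _))

lemma partialFst_eq_of_hasDerivAt (hf : DifferentiableAt ℝ f p) {d : ℝ}
    (hd : HasDerivAt (fun x ↦ f (x, p.2)) d p.1) : partialFst f p = d :=
  (hasDerivAt_partialFst hf).unique hd

lemma partialSnd_eq_of_hasDerivAt (hf : DifferentiableAt ℝ f p) {d : ℝ}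
    (hd : HasDerivAt (fun y ↦ f (p.1, y)) d p.2) : partialSnd f p = d :=
  (hasDerivAt_partialSnd hf).unique hd

lemma partialFst_mul (hf : DifferentiableAt ℝ f p) (hg : DifferentiableAt ℝ g p) :
    partialFst (fun q ↦ f q * g q) p = partialFst f p * g p + f p * partialFst g p :=
  partialFst_eq_of_hasDerivAt (hf.mul hg)
    ((hasDerivAt_partialFst hf).fun_mul (hasDerivAt_partialFst hg))

lemma partialSnd_mul (hf : DifferentiableAt ℝ f p) (hg : DifferentiableAt ℝ g p) :
    partialSnd (fun q ↦ f q * g q) p = partialSnd f p * g p + f p * partialSnd g p :=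
  partialSnd_eq_of_hasDerivAt (hf.mul hg)
    ((hasDerivAt_partialSnd hf).fun_mul (hasDerivAt_partialSnd hg))

lemma gradSq_neg (f : ℝ × ℝ → ℝ) (p : ℝ × ℝ) : gradSq (fun q ↦ -f q) p = gradSq f p := by
  simp [gradSq, partialFst, partialSnd, fderiv_fun_neg]

lemma gradSq_add_add_gradSq_sub (hf : DifferentiableAt ℝ f p) (hg : DifferentiableAt ℝ g p) :
    gradSq (fun q ↦ f q + g q) p + gradSq (fun q ↦ f q - g q) p =
      2 * (gradSq f p + gradSq g p) := by
  simp only [gradSq, partialFst, partialSnd, fderiv_fun_add hf hg, fderiv_fun_sub hf hg,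
    add_apply, sub_apply]
  ring

lemma continuous_partialFst (hf : ContDiff ℝ 1 f) : Continuous (partialFst f) :=
  (hf.continuous_fderiv one_ne_zero).clm_apply continuous_const

lemma continuous_partialSnd (hf : ContDiff ℝ 1 f) : Continuous (partialSnd f) :=
  (hf.continuous_fderiv one_ne_zero).clm_apply continuous_const

lemma continuous_gradSq (hf : ContDiff ℝ 1 f) : Continuous (gradSq f) :=
  ((continuous_partialFst hf).pow 2).add ((continuous_partialSnd hf).pow 2)

lemma integrableOn_of_continuous_of_isBounded {X E : Type*} [MetricSpace X] [ProperSpace X]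
    [MeasurableSpace X] [BorelSpace X] {μ : Measure X} [IsFiniteMeasureOnCompacts μ]
    [NormedAddCommGroup E] {f : X → E} (hf : Continuous f) {S : Set X}
    (hS : Bornology.IsBounded S) : IntegrableOn f S μ :=
  (hf.continuousOn.integrableOn_compact hS.isCompact_closure).mono_set subset_closure

lemma dirichletEnergy_add_add_dirichletEnergy_sub {S : Set (ℝ × ℝ)} (hS : Bornology.IsBounded S)
    (hf : ContDiff ℝ 1 f) (hg : ContDiff ℝ 1 g) :
    dirichletEnergy S (fun q ↦ f q + g q) + dirichletEnergy S (fun q ↦ f q - g q) =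
      2 * (dirichletEnergy S f + dirichletEnergy S g) := by
  have hint {k : ℝ × ℝ → ℝ} (hk : ContDiff ℝ 1 k) : IntegrableOn (gradSq k) S :=
    integrableOn_of_continuous_of_isBounded (continuous_gradSq hk) hS
  simp only [dirichletEnergy]
  rw [← integral_add (hint (hf.add hg)) (hint (hf.sub hg)), ← integral_add (hint hf) (hint hg),
    ← integral_const_mul]
  exact integral_congr_ae <| .of_forall fun p ↦ gradSq_add_add_gradSq_sub
    (hf.differentiable one_ne_zero p) (hg.differentiable one_ne_zero p)

end Partial

/-- The half `|y| < x < 1` of the reference triangle `-1 < y < x < 1` that lies on one side of its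
axis of symmetry `x + y = 0`. -/
def halfTriangle : Set (ℝ × ℝ) := {p | |p.2| < p.1 ∧ p.1 < 1}

/-- The closure `|y| ≤ x ≤ 1` of `halfTriangle`. -/
def closedHalfTriangle : Set (ℝ × ℝ) := {p | |p.2| ≤ p.1 ∧ p.1 ≤ 1}

/-- The Duffy map, which collapses the side `s = 0` of a rectangle to the vertex of
`halfTriangle`. -/
def duffy (p : ℝ × ℝ) : ℝ × ℝ := (p.1, p.1 * p.2)

/-- The rectangle that the Duffy map sends bijectively to `halfTriangle`. -/
def duffyBox : Set (ℝ × ℝ) := Ioo 0 1 ×ˢ Ioo (-1) 1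

lemma halfTriangle_subset_closedHalfTriangle : halfTriangle ⊆ closedHalfTriangle :=
  fun _ hp ↦ ⟨hp.1.le, hp.2.le⟩

lemma closedHalfTriangle_subset_Icc : closedHalfTriangle ⊆ Icc (-1, -1) (1, 1) := by
  rintro p ⟨hp, hp'⟩
  obtain ⟨hlower, hupper⟩ := abs_le.1 hp
  exact ⟨⟨by linarith, by linarith⟩, ⟨hp', by linarith⟩⟩

lemma isBounded_halfTriangle : Bornology.IsBounded halfTriangle :=
  (Metric.isBounded_Icc ((-1, -1) : ℝ × ℝ) (1, 1)).subset <|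
    halfTriangle_subset_closedHalfTriangle.trans closedHalfTriangle_subset_Icc

lemma isBounded_duffyBox : Bornology.IsBounded duffyBox :=
  (Metric.isBounded_Ioo 0 1).prod (Metric.isBounded_Ioo (-1) 1)

lemma measurableSet_duffyBox : MeasurableSet duffyBox := measurableSet_Ioo.prod measurableSet_Ioo

lemma duffyBox_ae_eq_Icc : duffyBox =ᵐ[volume] Icc ((0, -1) : ℝ × ℝ) (1, 1) := by
  rw [Icc_prod_eq]
  exact Measure.set_prod_ae_eq Ioo_ae_eq_Icc Ioo_ae_eq_Icc

lemma mapsTo_duffy_duffyBox : MapsTo duffy duffyBox halfTriangle := by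
  rintro ⟨s, t⟩ ⟨⟨hs₀, hs₁⟩, ht⟩
  refine ⟨?_, hs₁⟩
  simpa [duffy, abs_mul, abs_of_pos hs₀] using mul_lt_mul_of_pos_left (abs_lt.2 ht) hs₀

lemma mapsTo_duffy_Icc : MapsTo duffy (Icc (0, -1) (1, 1)) closedHalfTriangle := by
  rintro ⟨s, t⟩ ⟨⟨hs₀, ht₀⟩, ⟨hs₁, ht₁⟩⟩
  refine ⟨?_, hs₁⟩
  simpa [duffy, abs_mul, abs_of_nonneg hs₀] using
    mul_le_mul_of_nonneg_left (abs_le.2 ⟨ht₀, ht₁⟩) hs₀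

lemma injOn_duffy : InjOn duffy duffyBox := by
  rintro ⟨s, t⟩ ⟨⟨hs, -⟩, -⟩ ⟨s', t'⟩ - heq
  obtain ⟨rfl, ht⟩ := Prod.mk.inj heq
  exact Prod.ext rfl (mul_left_cancel₀ hs.ne' ht)

lemma image_duffy_duffyBox : duffy '' duffyBox = halfTriangle := by
  refine mapsTo_duffy_duffyBox.image_subset.antisymm fun ⟨x, y⟩ ⟨hxy, hx₁⟩ ↦ ?_
  have hx₀ : 0 < x := (abs_nonneg y).trans_lt hxy
  obtain ⟨hlower, hupper⟩ := abs_lt.1 hxy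
  refine ⟨(x, y / x), ⟨⟨hx₀, hx₁⟩, ?_, ?_⟩, ?_⟩
  · rw [lt_div_iff₀ hx₀]
    linarith
  · rwa [div_lt_one hx₀]
  · simp [duffy, mul_div_cancel₀ y hx₀.ne']

/-- The derivative of the Duffy map. -/
noncomputable def duffyDeriv (p : ℝ × ℝ) : ℝ × ℝ →L[ℝ] ℝ × ℝ :=
  (Matrix.toLin (.finTwoProd ℝ) (.finTwoProd ℝ) !![1, 0; p.2, p.1]).toContinuousLinearMap

lemma hasFDerivAt_duffy (p : ℝ × ℝ) : HasFDerivAt duffy (duffyDeriv p) p := by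
  have hfst : HasFDerivAt Prod.fst (ContinuousLinearMap.fst ℝ ℝ ℝ) p := hasFDerivAt_fst
  have hsnd : HasFDerivAt Prod.snd (ContinuousLinearMap.snd ℝ ℝ ℝ) p := hasFDerivAt_snd
  rw [duffyDeriv, Matrix.toLin_finTwoProd_toContinuousLinearMap]
  convert! hfst.prodMk (hfst.mul hsnd) using 1
  ext <;> simp

@[fun_prop]
lemma continuous_duffy : Continuous duffy :=
  continuous_iff_continuousAt.2 fun p ↦ (hasFDerivAt_duffy p).continuousAt

lemma det_duffyDeriv (p : ℝ × ℝ) : (duffyDeriv p).det = p.1 := by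
  simp [duffyDeriv, LinearMap.det_toContinuousLinearMap, LinearMap.det_toLin]

lemma abs_det_duffyDeriv_smul_eqOn (g : ℝ × ℝ → ℝ) :
    EqOn (fun p ↦ |(duffyDeriv p).det| • g (duffy p)) (fun p ↦ p.1 * g (duffy p)) duffyBox :=
  fun p hp ↦ by simp only [det_duffyDeriv, abs_of_pos hp.1.1, smul_eq_mul]

lemma setIntegral_halfTriangle (g : ℝ × ℝ → ℝ) :
    ∫ p in halfTriangle, g p = ∫ p in duffyBox, p.1 * g (duffy p) := by
  rw [← image_duffy_duffyBox, integral_image_eq_integral_abs_det_fderiv_smul volume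
    measurableSet_duffyBox (fun p _ ↦ (hasFDerivAt_duffy p).hasFDerivWithinAt) injOn_duffy]
  exact setIntegral_congr_fun measurableSet_duffyBox (abs_det_duffyDeriv_smul_eqOn g)

lemma integrableOn_halfTriangle_iff (g : ℝ × ℝ → ℝ) :
    IntegrableOn g halfTriangle ↔ IntegrableOn (fun p ↦ p.1 * g (duffy p)) duffyBox := by
  rw [← image_duffy_duffyBox, integrableOn_image_iff_integrableOn_abs_det_fderiv_smul volume
    measurableSet_duffyBox (fun p _ ↦ (hasFDerivAt_duffy p).hasFDerivWithinAt) injOn_duffy]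
  exact integrableOn_congr_fun (abs_det_duffyDeriv_smul_eqOn g) measurableSet_duffyBox

lemma partialFst_comp_duffy {P : ℝ × ℝ → ℝ} {p : ℝ × ℝ} (hP : DifferentiableAt ℝ P (duffy p)) :
    partialFst (fun q ↦ P (duffy q)) p =
      partialFst P (duffy p) + p.2 * partialSnd P (duffy p) := by
  have hcomp : HasFDerivAt (fun q ↦ P (duffy q)) _ p := hP.hasFDerivAt.comp p (hasFDerivAt_duffy p)
  rw [partialFst, hcomp.fderiv, ContinuousLinearMap.comp_apply, fderiv_apply_eq_partial]
  simp [duffyDeriv]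

lemma partialSnd_comp_duffy {P : ℝ × ℝ → ℝ} {p : ℝ × ℝ} (hP : DifferentiableAt ℝ P (duffy p)) :
    partialSnd (fun q ↦ P (duffy q)) p = p.1 * partialSnd P (duffy p) := by
  have hcomp : HasFDerivAt (fun q ↦ P (duffy q)) _ p := hP.hasFDerivAt.comp p (hasFDerivAt_duffy p)
  rw [partialSnd, hcomp.fderiv, ContinuousLinearMap.comp_apply, fderiv_apply_eq_partial]
  simp [duffyDeriv]

/- The field on the left is the Piola transform of `(P, Q)` under the Duffy map. -/
lemma partialFst_add_partialSnd_piola {P Q : ℝ × ℝ → ℝ} {p : ℝ × ℝ}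
    (hP : DifferentiableAt ℝ P (duffy p)) (hQ : DifferentiableAt ℝ Q (duffy p)) :
    partialFst (fun q ↦ q.1 * P (duffy q)) p +
        partialSnd (fun q ↦ Q (duffy q) - q.2 * P (duffy q)) p =
      p.1 * (partialFst P (duffy p) + partialSnd Q (duffy p)) := by
  have hduffy : DifferentiableAt ℝ duffy p := (hasFDerivAt_duffy p).differentiableAt
  have hPd : DifferentiableAt ℝ (fun q ↦ P (duffy q)) p := hP.comp p hduffy
  have hQd : DifferentiableAt ℝ (fun q ↦ Q (duffy q)) p := hQ.comp p hduffy
  have hfst : partialFst (fun q ↦ q.1 * P (duffy q)) p =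
      P (duffy p) + p.1 * partialFst (fun q ↦ P (duffy q)) p :=
    partialFst_eq_of_hasDerivAt (by fun_prop) <| by
      simpa using (hasDerivAt_id p.1).fun_mul (hasDerivAt_partialFst hPd)
  have hsnd : partialSnd (fun q ↦ Q (duffy q) - q.2 * P (duffy q)) p =
      partialSnd (fun q ↦ Q (duffy q)) p -
        (P (duffy p) + p.2 * partialSnd (fun q ↦ P (duffy q)) p) :=
    partialSnd_eq_of_hasDerivAt (by fun_prop) <| by
      simpa using (hasDerivAt_partialSnd hQd).fun_sub
        ((hasDerivAt_id p.2).fun_mul (hasDerivAt_partialSnd hPd))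
  rw [hfst, hsnd, partialFst_comp_duffy hP, partialSnd_comp_duffy hP, partialSnd_comp_duffy hQ]
  ring

/- Continuity is only required in Duffy coordinates, so that the field may be irregular at the
vertex. -/
theorem integral_divergence_halfTriangle {P Q : ℝ × ℝ → ℝ}
    (hPcont : ContinuousOn (fun p ↦ P (duffy p)) (Icc (0, -1) (1, 1)))
    (hQcont : ContinuousOn (fun p ↦ Q (duffy p)) (Icc (0, -1) (1, 1)))
    (hP : ∀ p ∈ halfTriangle, DifferentiableAt ℝ P p)
    (hQ : ∀ p ∈ halfTriangle, DifferentiableAt ℝ Q p)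
    (hint : IntegrableOn (fun p ↦ partialFst P p + partialSnd Q p) halfTriangle) :
    ∫ p in halfTriangle, (partialFst P p + partialSnd Q p) =
      (∫ t in (-1 : ℝ)..1, P (1, t)) + (∫ s in (0 : ℝ)..1, (Q (s, s) - P (s, s))) -
        ∫ s in (0 : ℝ)..1, (Q (s, -s) + P (s, -s)) := by
  let F : ℝ × ℝ → ℝ := fun p ↦ p.1 * P (duffy p)
  let G : ℝ × ℝ → ℝ := fun p ↦ Q (duffy p) - p.2 * P (duffy p)
  have hduffy : Differentiable ℝ duffy := fun p ↦ (hasFDerivAt_duffy p).differentiableAt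
  have hPd (p : ℝ × ℝ) (hp : p ∈ duffyBox) : DifferentiableAt ℝ (fun q ↦ P (duffy q)) p :=
    (hP _ (mapsTo_duffy_duffyBox hp)).comp p (hduffy p)
  have hQd (p : ℝ × ℝ) (hp : p ∈ duffyBox) : DifferentiableAt ℝ (fun q ↦ Q (duffy q)) p :=
    (hQ _ (mapsTo_duffy_duffyBox hp)).comp p (hduffy p)
  have hdiv : EqOn (fun p ↦ partialFst F p + partialSnd G p)
      (fun p ↦ p.1 * (partialFst P (duffy p) + partialSnd Q (duffy p))) duffyBox := fun p hp ↦
    partialFst_add_partialSnd_piola (hP _ (mapsTo_duffy_duffyBox hp))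
      (hQ _ (mapsTo_duffy_duffyBox hp))
  have hFG : IntegrableOn (fun p ↦ partialFst F p + partialSnd G p) (Icc (0, -1) (1, 1)) :=
    (((integrableOn_halfTriangle_iff _).1 hint).congr_fun hdiv.symm
      measurableSet_duffyBox).congr_set_ae duffyBox_ae_eq_Icc.symm
  have hbox := integral_divergence_prod_Icc_of_hasFDerivAt_off_countable_of_le F G (fderiv ℝ F)
    (fderiv ℝ G) (0, -1) (1, 1) ⟨by norm_num, by norm_num⟩ ∅ countable_empty
    (continuousOn_fst.mul hPcont) (hQcont.sub (continuousOn_snd.mul hPcont))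
    (fun p hp ↦ (differentiableAt_fst.mul (hPd p hp.1)).hasFDerivAt)
    (fun p hp ↦ ((hQd p hp.1).sub (differentiableAt_snd.mul (hPd p hp.1))).hasFDerivAt) hFG
  calc ∫ p in halfTriangle, (partialFst P p + partialSnd Q p)
      = ∫ p in duffyBox, (partialFst F p + partialSnd G p) := by
        rw [setIntegral_halfTriangle, setIntegral_congr_fun measurableSet_duffyBox hdiv]
    _ = ∫ p in Icc (0, -1) (1, 1), (partialFst F p + partialSnd G p) :=
        setIntegral_congr_set duffyBox_ae_eq_Icc
    _ = _ := hbox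
    _ = _ := by
        simp only [F, G, duffy, one_mul, mul_one, mul_neg, zero_mul, neg_mul, sub_neg_eq_add,
          intervalIntegral.integral_zero]
        ring

lemma isCompact_closedHalfTriangle : IsCompact closedHalfTriangle := by
  have hclosed : IsClosed closedHalfTriangle :=
    (isClosed_le (by fun_prop) continuous_fst).inter (isClosed_le continuous_fst continuous_const)
  exact isCompact_Icc.of_isClosed_subset hclosed closedHalfTriangle_subset_Icc

lemma measurableSet_halfTriangle : MeasurableSet halfTriangle :=
  (measurableSet_lt (by fun_prop) measurable_fst).inter
    (measurableSet_lt measurable_fst measurable_const)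

section ContDiffField

variable {P Q : ℝ × ℝ → ℝ}

lemma integrableOn_divergence_halfTriangle (hP : ∀ p ∈ closedHalfTriangle, ContDiffAt ℝ 1 P p)
    (hQ : ∀ p ∈ closedHalfTriangle, ContDiffAt ℝ 1 Q p) :
    IntegrableOn (fun p ↦ partialFst P p + partialSnd Q p) halfTriangle := by
  refine IntegrableOn.mono_set (ContinuousOn.integrableOn_compact isCompact_closedHalfTriangle
    fun p hp ↦ ContinuousAt.continuousWithinAt ?_) halfTriangle_subset_closedHalfTriangle
  exact (((hP p hp).continuousAt_fderiv one_ne_zero).clm_apply continuousAt_const).add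
    (((hQ p hp).continuousAt_fderiv one_ne_zero).clm_apply continuousAt_const)

lemma integral_divergence_halfTriangle_of_contDiffAt
    (hP : ∀ p ∈ closedHalfTriangle, ContDiffAt ℝ 1 P p)
    (hQ : ∀ p ∈ closedHalfTriangle, ContDiffAt ℝ 1 Q p) :
    ∫ p in halfTriangle, (partialFst P p + partialSnd Q p) =
      (∫ t in (-1 : ℝ)..1, P (1, t)) + (∫ s in (0 : ℝ)..1, (Q (s, s) - P (s, s))) -
        ∫ s in (0 : ℝ)..1, (Q (s, -s) + P (s, -s)) := by
  have hcont {R : ℝ × ℝ → ℝ} (hR : ∀ p ∈ closedHalfTriangle, ContDiffAt ℝ 1 R p) :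
      ContinuousOn (fun p ↦ R (duffy p)) (Icc (0, -1) (1, 1)) := fun p hp ↦
    ((hR _ (mapsTo_duffy_Icc hp)).continuousAt.comp
      continuous_duffy.continuousAt).continuousWithinAt
  have hdiff {R : ℝ × ℝ → ℝ} (hR : ∀ p ∈ closedHalfTriangle, ContDiffAt ℝ 1 R p) (p : ℝ × ℝ)
      (hp : p ∈ halfTriangle) : DifferentiableAt ℝ R p :=
    (hR p (halfTriangle_subset_closedHalfTriangle hp)).differentiableAt one_ne_zero
  exact integral_divergence_halfTriangle (hcont hP) (hcont hQ) (hdiff hP) (hdiff hQ)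
    (integrableOn_divergence_halfTriangle hP hQ)

end ContDiffField

lemma contDiff_partialFst {f : ℝ × ℝ → ℝ} (hf : ContDiff ℝ 2 f) : ContDiff ℝ 1 (partialFst f) :=
  (hf.fderiv_right (by norm_num)).clm_apply contDiff_const

lemma contDiff_partialSnd {f : ℝ × ℝ → ℝ} (hf : ContDiff ℝ 2 f) : ContDiff ℝ 1 (partialSnd f) :=
  (hf.fderiv_right (by norm_num)).clm_apply contDiff_const

lemma hasDerivAt_sq_mul_div {f u v : ℝ → ℝ} {f' u' v' x : ℝ} (hf : HasDerivAt f f' x)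
    (hu : HasDerivAt u u' x) (hv : HasDerivAt v v' x) (hux : u x ≠ 0) :
    HasDerivAt (fun x ↦ f x ^ 2 * v x / u x)
      (2 * f x * f' * v x / u x + f x ^ 2 * v' / u x - f x ^ 2 * v x * u' / u x ^ 2) x := by
  convert! ((hf.fun_pow 2).fun_mul hv).fun_div hu hux using 1
  field_simp
  simp only [Nat.cast_ofNat, Nat.add_one_sub_one, pow_one]
  ring

lemma picone_inequality {f u : ℝ × ℝ → ℝ} {p : ℝ × ℝ} (hf : DifferentiableAt ℝ f p)
    (hu : ContDiff ℝ 2 u) (hpos : 0 < u p)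
    (hsuper : partialFst (partialFst u) p + partialSnd (partialSnd u) p ≤ 0) :
    partialFst (fun q ↦ f q ^ 2 * partialFst u q / u q) p +
      partialSnd (fun q ↦ f q ^ 2 * partialSnd u q / u q) p ≤ gradSq f p := by
  have hud := hu.differentiable two_ne_zero p
  have hud₁ := (contDiff_partialFst hu).differentiable one_ne_zero p
  have hud₂ := (contDiff_partialSnd hu).differentiable one_ne_zero p
  have hne := hpos.ne'
  rw [partialFst_eq_of_hasDerivAt (by fun_prop (disch := assumption))
      (hasDerivAt_sq_mul_div (hasDerivAt_partialFst hf) (hasDerivAt_partialFst hud)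
        (hasDerivAt_partialFst hud₁) hne),
    partialSnd_eq_of_hasDerivAt (by fun_prop (disch := assumption))
      (hasDerivAt_sq_mul_div (hasDerivAt_partialSnd hf) (hasDerivAt_partialSnd hud)
        (hasDerivAt_partialSnd hud₂) hne)]
  have hlaplace : f p ^ 2 / u p *
      (partialFst (partialFst u) p + partialSnd (partialSnd u) p) ≤ 0 :=
    mul_nonpos_of_nonneg_of_nonpos (by positivity) hsuper
  have hsq₁ := sq_nonneg (partialFst f p - f p * partialFst u p / u p)
  have hsq₂ := sq_nonneg (partialSnd f p - f p * partialSnd u p / u p)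
  unfold gradSq
  ring_nf at hlaplace hsq₁ hsq₂ ⊢
  linarith

lemma integral_sq_mul_logDeriv_le_dirichletEnergy {f u : ℝ × ℝ → ℝ} (hf : ContDiff ℝ 1 f)
    (hu : ContDiff ℝ 2 u) (hpos : ∀ p ∈ closedHalfTriangle, 0 < u p)
    (hsuper : ∀ p ∈ halfTriangle, partialFst (partialFst u) p + partialSnd (partialSnd u) p ≤ 0)
    (hneumann : ∀ s, partialSnd u (s, s) = partialFst u (s, s)) (hdirichlet : ∀ s, f (s, -s) = 0) :
    ∫ t in (-1 : ℝ)..1, f (1, t) ^ 2 * partialFst u (1, t) / u (1, t) ≤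
      dirichletEnergy halfTriangle f := by
  let P : ℝ × ℝ → ℝ := fun q ↦ f q ^ 2 * partialFst u q / u q
  let Q : ℝ × ℝ → ℝ := fun q ↦ f q ^ 2 * partialSnd u q / u q
  have hu₁ : ContDiff ℝ 1 u := hu.of_le (by norm_num)
  have hP (p : ℝ × ℝ) (hp : p ∈ closedHalfTriangle) : ContDiffAt ℝ 1 P p :=
    ((hf.pow 2).mul (contDiff_partialFst hu)).contDiffAt.div hu₁.contDiffAt (hpos p hp).ne'
  have hQ (p : ℝ × ℝ) (hp : p ∈ closedHalfTriangle) : ContDiffAt ℝ 1 Q p :=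
    ((hf.pow 2).mul (contDiff_partialSnd hu)).contDiffAt.div hu₁.contDiffAt (hpos p hp).ne'
  calc ∫ t in (-1 : ℝ)..1, P (1, t)
      = ∫ p in halfTriangle, (partialFst P p + partialSnd Q p) := by
        rw [integral_divergence_halfTriangle_of_contDiffAt hP hQ]
        simp [P, Q, hneumann, hdirichlet]
    _ ≤ dirichletEnergy halfTriangle f :=
        setIntegral_mono_on (integrableOn_divergence_halfTriangle hP hQ)
          (integrableOn_of_continuous_of_isBounded (continuous_gradSq hf) isBounded_halfTriangle)
          measurableSet_halfTriangle fun p hp ↦ picone_inequality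
            (hf.differentiable one_ne_zero p) hu
            (hpos p (halfTriangle_subset_closedHalfTriangle hp)) (hsuper p hp)

lemma dirichletEnergy_eq_integral_mul_partialFst {u : ℝ × ℝ → ℝ} (hu : ContDiff ℝ 2 u)
    (hharmonic : ∀ p ∈ halfTriangle, partialFst (partialFst u) p + partialSnd (partialSnd u) p = 0)
    (hneumann : ∀ s, partialSnd u (s, s) = partialFst u (s, s)) (hdirichlet : ∀ s, u (s, -s) = 0) :
    dirichletEnergy halfTriangle u = ∫ t in (-1 : ℝ)..1, u (1, t) * partialFst u (1, t) := by
  have hu₁ : ContDiff ℝ 1 u := hu.of_le (by norm_num)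
  have hdiv : EqOn (gradSq u) (fun p ↦ partialFst (fun q ↦ u q * partialFst u q) p +
      partialSnd (fun q ↦ u q * partialSnd u q) p) halfTriangle := fun p hp ↦ by
    have hud := hu₁.differentiable one_ne_zero p
    simp only [gradSq]
    rw [partialFst_mul hud ((contDiff_partialFst hu).differentiable one_ne_zero p),
      partialSnd_mul hud ((contDiff_partialSnd hu).differentiable one_ne_zero p)]
    linear_combination -u p * hharmonic p hp
  rw [dirichletEnergy, setIntegral_congr_fun measurableSet_halfTriangle hdiv,
    integral_divergence_halfTriangle_of_contDiffAt
      (fun p _ ↦ (hu₁.mul (contDiff_partialFst hu)).contDiffAt)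
      (fun p _ ↦ (hu₁.mul (contDiff_partialSnd hu)).contDiffAt)]
  simp [hneumann, hdirichlet]

lemma tendsto_integral_mul_div_add {a b : ℝ} (hab : a ≤ b) {g v : ℝ → ℝ} (hg : Continuous g)
    (hv : Continuous v) (hpos : ∀ t ∈ Ioc a b, 0 < v t) :
    Tendsto (fun ε ↦ ∫ t in a..b, g t * (v t / (v t + ε))) (𝓝[>] 0) (𝓝 (∫ t in a..b, g t)) := by
  refine intervalIntegral.tendsto_integral_filter_of_dominated_convergence (fun t ↦ |g t|)
    (.of_forall fun ε ↦ (hg.measurable.mul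
      (hv.measurable.div (hv.measurable.add_const ε))).aestronglyMeasurable)
    ?_ (hg.abs.intervalIntegrable _ _) (.of_forall fun t ht ↦ ?_)
  · filter_upwards [self_mem_nhdsWithin] with ε (hε : 0 < ε)
    refine .of_forall fun t ht ↦ ?_
    have hvt := hpos t (uIoc_of_le hab ▸ ht)
    have hle : v t / (v t + ε) ≤ 1 := (div_le_one (by positivity)).2 (by linarith)
    rw [norm_mul, norm_eq_abs, norm_of_nonneg (by positivity)]
    exact mul_le_of_le_one_right (abs_nonneg _) hle
  · have hvt := (hpos t (uIoc_of_le hab ▸ ht)).ne'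
    have hcont : ContinuousAt (fun ε ↦ g t * (v t / (v t + ε))) 0 := by
      fun_prop (disch := simpa using hvt)
    simpa [hvt] using hcont.tendsto.mono_left nhdsWithin_le_nhds

lemma partialFst_add_const (u : ℝ × ℝ → ℝ) (c : ℝ) :
    partialFst (fun q ↦ u q + c) = partialFst u := by
  simp [funext_iff, partialFst]

lemma partialSnd_add_const (u : ℝ × ℝ → ℝ) (c : ℝ) :
    partialSnd (fun q ↦ u q + c) = partialSnd u := by
  simp [funext_iff, partialSnd]

/- `u` may vanish on the boundary, so Picone's inequality is applied to `u + ε` with `ε → 0`. -/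
theorem mul_integral_sq_le_dirichletEnergy_of_superharmonic {f u : ℝ × ℝ → ℝ} {κ : ℝ}
    (hf : ContDiff ℝ 1 f) (hu : ContDiff ℝ 2 u) (hnonneg : ∀ p ∈ closedHalfTriangle, 0 ≤ u p)
    (hpos : ∀ t ∈ Ioc (-1 : ℝ) 1, 0 < u (1, t))
    (hsuper : ∀ p ∈ halfTriangle, partialFst (partialFst u) p + partialSnd (partialSnd u) p ≤ 0)
    (hrobin : ∀ t, partialFst u (1, t) = κ * u (1, t))
    (hneumann : ∀ s, partialSnd u (s, s) = partialFst u (s, s)) (hdirichlet : ∀ s, f (s, -s) = 0) :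
    κ * ∫ t in (-1 : ℝ)..1, f (1, t) ^ 2 ≤ dirichletEnergy halfTriangle f := by
  have hfc := hf.continuous
  have huc := hu.continuous
  have hlim := (tendsto_integral_mul_div_add (g := fun t ↦ f (1, t) ^ 2) (v := fun t ↦ u (1, t))
    (by norm_num) (by fun_prop) (by fun_prop) hpos).const_mul κ
  refine le_of_tendsto hlim ?_
  filter_upwards [self_mem_nhdsWithin] with ε (hε : 0 < ε)
  have hpicone := integral_sq_mul_logDeriv_le_dirichletEnergy (u := fun q ↦ u q + ε) hf
    (hu.add contDiff_const) (fun p hp ↦ add_pos_of_nonneg_of_pos (hnonneg p hp) hε)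
    (by simpa only [partialFst_add_const, partialSnd_add_const] using hsuper)
    (by simpa only [partialFst_add_const, partialSnd_add_const] using hneumann) hdirichlet
  refine le_of_eq_of_le ?_ hpicone
  rw [← intervalIntegral.integral_const_mul]
  congr 1 with t
  rw [partialFst_add_const, hrobin]
  ring

/-- The extremal function of the reference triangle. For `a tanh a` to be its Steklov eigenvalue on
the legs, `a` has to solve `tanh a * tan a = 1`. -/
noncomputable def steklovMode (a : ℝ) (p : ℝ × ℝ) : ℝ :=
  sin (a * p.1) * cosh (a * p.2) + cosh (a * p.1) * sin (a * p.2)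

section Mode

variable {a : ℝ}

lemma contDiff_steklovMode {n : WithTop ℕ∞} (a : ℝ) : ContDiff ℝ n (steklovMode a) := by
  unfold steklovMode
  fun_prop

lemma partialFst_steklovMode (a : ℝ) : partialFst (steklovMode a) = fun p ↦
    a * (cos (a * p.1) * cosh (a * p.2) + sinh (a * p.1) * sin (a * p.2)) := by
  ext p
  have hlin : HasDerivAt (fun x ↦ a * x) a p.1 := by simpa using (hasDerivAt_id p.1).const_mul a
  refine partialFst_eq_of_hasDerivAt ((contDiff_steklovMode a).differentiable one_ne_zero p) ?_
  convert! (hlin.sin.mul_const (cosh (a * p.2))).add (hlin.cosh.mul_const (sin (a * p.2))) using 1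
  ring

lemma partialSnd_steklovMode (a : ℝ) : partialSnd (steklovMode a) = fun p ↦
    a * (sin (a * p.1) * sinh (a * p.2) + cosh (a * p.1) * cos (a * p.2)) := by
  ext p
  have hlin : HasDerivAt (fun y ↦ a * y) a p.2 := by simpa using (hasDerivAt_id p.2).const_mul a
  refine partialSnd_eq_of_hasDerivAt ((contDiff_steklovMode a).differentiable one_ne_zero p) ?_
  convert! (hlin.cosh.const_mul (sin (a * p.1))).add (hlin.sin.const_mul (cosh (a * p.1))) using 1
  ring

lemma laplacian_steklovMode (a : ℝ) (p : ℝ × ℝ) :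
    partialFst (partialFst (steklovMode a)) p + partialSnd (partialSnd (steklovMode a)) p = 0 := by
  have hfst : HasDerivAt (fun x ↦ a * x) a p.1 := by simpa using (hasDerivAt_id p.1).const_mul a
  have hsnd : HasDerivAt (fun y ↦ a * y) a p.2 := by simpa using (hasDerivAt_id p.2).const_mul a
  rw [partialFst_steklovMode, partialSnd_steklovMode,
    partialFst_eq_of_hasDerivAt (by fun_prop) (((hfst.cos.mul_const (cosh (a * p.2))).fun_add
      (hfst.sinh.mul_const (sin (a * p.2)))).const_mul a),
    partialSnd_eq_of_hasDerivAt (by fun_prop) (((hsnd.sinh.const_mul (sin (a * p.1))).fun_add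
      (hsnd.cos.const_mul (cosh (a * p.1)))).const_mul a)]
  ring

lemma partialFst_steklovMode_one (hroot : sin a * sinh a = cos a * cosh a) (t : ℝ) :
    partialFst (steklovMode a) (1, t) = a * tanh a * steklovMode a (1, t) := by
  have hcosh : cosh a ≠ 0 := (cosh_pos a).ne'
  simp only [partialFst_steklovMode, steklovMode, tanh_eq_sinh_div_cosh, mul_one]
  field_simp
  linear_combination (-a * cosh (a * t)) * hroot

lemma partialSnd_steklovMode_diag (a s : ℝ) :
    partialSnd (steklovMode a) (s, s) = partialFst (steklovMode a) (s, s) := by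
  simp only [partialFst_steklovMode, partialSnd_steklovMode]
  ring

lemma steklovMode_neg_swap (a x y : ℝ) : steklovMode a (-y, -x) = -steklovMode a (x, y) := by
  simp only [steklovMode, mul_neg, sin_neg, cosh_neg]
  ring

lemma steklovMode_antidiag (a s : ℝ) : steklovMode a (s, -s) = 0 := by
  simp only [steklovMode, mul_neg, sin_neg, cosh_neg]
  ring

lemma sin_mul_sinh_lt_cos_mul_cosh (ha : a ≤ π) (hroot : sin a * sinh a = cos a * cosh a) {x : ℝ}
    (hx : |x| < a) : sin x * sinh x < cos x * cosh x := by
  let D : ℝ → ℝ := fun x ↦ cos x * cosh x - sin x * sinh x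
  have hderiv (y : ℝ) : HasDerivAt D (-2 * (sin y * cosh y)) y := by
    convert! ((hasDerivAt_cos y).mul (hasDerivAt_cosh y)).sub
      ((hasDerivAt_sin y).mul (hasDerivAt_sinh y)) using 1
    ring
  have hanti : StrictAntiOn D (Icc 0 a) := by
    refine strictAntiOn_of_deriv_neg (convex_Icc 0 a) (by fun_prop) fun y hy ↦ ?_
    rw [interior_Icc] at hy
    have hsin : 0 < sin y := sin_pos_of_pos_of_lt_pi hy.1 (hy.2.trans_le ha)
    rw [(hderiv y).deriv]
    linarith [mul_pos hsin (cosh_pos y)]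
  have hlt := hanti ⟨abs_nonneg x, hx.le⟩ ⟨(abs_nonneg x).trans hx.le, le_rfl⟩ hx
  have habs : D |x| = D x := by
    obtain hx | hx := abs_choice x <;> simp [D, hx]
  simp only [D] at hlt habs
  linarith

lemma strictMonoOn_sin_div_cosh (ha : a ≤ π) (hroot : sin a * sinh a = cos a * cosh a) :
    StrictMonoOn (fun x ↦ sin x / cosh x) (Icc (-a) a) := by
  refine strictMonoOn_of_deriv_pos (convex_Icc _ _)
    (continuousOn_sin.div continuous_cosh.continuousOn fun x _ ↦ (cosh_pos x).ne') fun x hx ↦ ?_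
  rw [interior_Icc] at hx
  rw [((hasDerivAt_sin x).fun_div (hasDerivAt_cosh x) (cosh_pos x).ne').deriv]
  have hlt := sub_pos.2 (sin_mul_sinh_lt_cos_mul_cosh ha hroot (abs_lt.2 hx))
  exact div_pos hlt (pow_pos (cosh_pos x) 2)

lemma steklovMode_eq_mul_sub (a : ℝ) (p : ℝ × ℝ) :
    steklovMode a p = cosh (a * p.1) * cosh (a * p.2) *
      (sin (a * p.1) / cosh (a * p.1) - sin (-(a * p.2)) / cosh (-(a * p.2))) := by
  have hcosh₁ := (cosh_pos (a * p.1)).ne'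
  have hcosh₂ := (cosh_pos (a * p.2)).ne'
  simp only [steklovMode, sin_neg, cosh_neg]
  field_simp
  ring

lemma steklovMode_pos (ha₀ : 0 < a) (ha : a ≤ π) (hroot : sin a * sinh a = cos a * cosh a)
    {p : ℝ × ℝ} (hp : p ∈ Icc ((-1, -1) : ℝ × ℝ) (1, 1)) (hsum : 0 < p.1 + p.2) :
    0 < steklovMode a p := by
  have hmem {y : ℝ} (hy : |y| ≤ 1) : a * y ∈ Icc (-a) a := by
    rw [mem_Icc, ← abs_le, abs_mul, abs_of_pos ha₀]
    exact mul_le_of_le_one_right ha₀.le hy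
  have hx := hmem (abs_le.2 ⟨hp.1.1, hp.2.1⟩)
  have hy : -(a * p.2) ∈ Icc (-a) a := by
    rw [← mul_neg]
    exact hmem (by simpa using abs_le.2 ⟨hp.1.2, hp.2.2⟩)
  have hlt := sub_pos.2 <|
    strictMonoOn_sin_div_cosh ha hroot hy hx (by linarith [mul_pos ha₀ hsum])
  rw [steklovMode_eq_mul_sub]
  exact mul_pos (mul_pos (cosh_pos _) (cosh_pos _)) hlt

lemma steklovMode_nonneg (ha₀ : 0 < a) (ha : a ≤ π) (hroot : sin a * sinh a = cos a * cosh a)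
    {p : ℝ × ℝ} (hp : p ∈ Icc ((-1, -1) : ℝ × ℝ) (1, 1)) (hsum : 0 ≤ p.1 + p.2) :
    0 ≤ steklovMode a p := by
  obtain hsum | hsum := hsum.lt_or_eq
  · exact (steklovMode_pos ha₀ ha hroot hp hsum).le
  · rw [show p = (p.1, -p.1) from Prod.ext rfl (by linarith), steklovMode_antidiag]

end Mode

theorem mul_tanh_mul_integral_sq_le_dirichletEnergy {a : ℝ} (ha₀ : 0 < a) (ha : a ≤ π)
    (hroot : sin a * sinh a = cos a * cosh a) {f : ℝ × ℝ → ℝ} (hf : ContDiff ℝ 1 f)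
    (hdirichlet : ∀ s, f (s, -s) = 0) :
    a * tanh a * ∫ t in (-1 : ℝ)..1, f (1, t) ^ 2 ≤ dirichletEnergy halfTriangle f := by
  refine mul_integral_sq_le_dirichletEnergy_of_superharmonic hf (contDiff_steklovMode a)
    (fun p hp ↦ ?_) (fun t ht ↦ ?_) (fun p _ ↦ (laplacian_steklovMode a p).le)
    (partialFst_steklovMode_one hroot) (partialSnd_steklovMode_diag a) hdirichlet
  · exact steklovMode_nonneg ha₀ ha hroot (closedHalfTriangle_subset_Icc hp)
      (by linarith [(abs_le.1 hp.1).1])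
  · exact steklovMode_pos ha₀ ha hroot ⟨⟨by norm_num, ht.1.le⟩, ⟨le_rfl, ht.2⟩⟩ (by linarith [ht.1])

/-- The extension of a function on the edge `x = 1` of `halfTriangle` to a positively homogeneous
function of degree one. It vanishes on `x = 0`. -/
noncomputable def conicExtension (k : ℝ → ℝ) (p : ℝ × ℝ) : ℝ := p.1 * k (p.2 / p.1)

lemma conicExtension_duffy (k : ℝ → ℝ) (p : ℝ × ℝ) :
    conicExtension k (duffy p) = p.1 * k p.2 := by
  obtain hp | hp := eq_or_ne p.1 0
  · simp [conicExtension, duffy, hp]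
  · simp [conicExtension, duffy, hp]

lemma conicExtension_one (k : ℝ → ℝ) (t : ℝ) : conicExtension k (1, t) = k t := by
  simp [conicExtension]

lemma conicExtension_diag (k : ℝ → ℝ) (s : ℝ) : conicExtension k (s, s) = s * k 1 := by
  simpa [duffy] using conicExtension_duffy k (s, 1)

lemma conicExtension_antidiag (k : ℝ → ℝ) (s : ℝ) : conicExtension k (s, -s) = s * k (-1) := by
  simpa [duffy] using conicExtension_duffy k (s, -1)

section ConicField

variable {k : ℝ → ℝ} {p : ℝ × ℝ}

lemma differentiableAt_conicExtension (hp : p.1 ≠ 0) (hk : Differentiable ℝ k) :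
    DifferentiableAt ℝ (conicExtension k) p := by
  have hdiv : DifferentiableAt ℝ (fun q : ℝ × ℝ ↦ q.2 / q.1) p := by fun_prop (disch := assumption)
  exact differentiableAt_fst.mul ((hk _).comp p hdiv)

lemma partialFst_conicExtension (hp : p.1 ≠ 0) (hk : Differentiable ℝ k) :
    partialFst (conicExtension k) p = k (p.2 / p.1) - p.2 / p.1 * deriv k (p.2 / p.1) := by
  have hdiv : HasDerivAt (fun x ↦ p.2 / x) (-p.2 / p.1 ^ 2) p.1 := by
    simpa using (hasDerivAt_const p.1 p.2).fun_div (hasDerivAt_id p.1) hp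
  refine partialFst_eq_of_hasDerivAt (differentiableAt_conicExtension hp hk) ?_
  convert! (hasDerivAt_id p.1).mul ((hk (p.2 / p.1)).hasDerivAt.comp p.1 hdiv) using 1
  simp only [id, Function.comp_apply]
  field_simp
  ring

lemma partialSnd_conicExtension (hp : p.1 ≠ 0) (hk : Differentiable ℝ k) :
    partialSnd (conicExtension k) p = deriv k (p.2 / p.1) := by
  refine partialSnd_eq_of_hasDerivAt (differentiableAt_conicExtension hp hk) ?_
  convert! ((hk (p.2 / p.1)).hasDerivAt.comp p.2 ((hasDerivAt_id p.2).div_const p.1)).const_mul p.1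
    using 1
  field_simp

lemma integrableOn_halfTriangle_conicExtension_sq (hk : Continuous k) :
    IntegrableOn (fun p ↦ conicExtension k p ^ 2) halfTriangle := by
  rw [integrableOn_halfTriangle_iff]
  simp only [conicExtension_duffy]
  exact integrableOn_of_continuous_of_isBounded (by fun_prop) isBounded_duffyBox

lemma setIntegral_halfTriangle_conicExtension_sq (k : ℝ → ℝ) :
    ∫ p in halfTriangle, conicExtension k p ^ 2 = 1 / 4 * ∫ t in (-1 : ℝ)..1, k t ^ 2 := by
  have hcube : ∫ s in Ioo (0 : ℝ) 1, s ^ 3 = 1 / 4 := by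
    rw [← integral_Ioc_eq_integral_Ioo, ← intervalIntegral.integral_of_le zero_le_one, integral_pow]
    norm_num
  calc ∫ p in halfTriangle, conicExtension k p ^ 2
      = ∫ p in duffyBox, p.1 ^ 3 * k p.2 ^ 2 := by
        rw [setIntegral_halfTriangle]
        congr 1 with p
        rw [conicExtension_duffy]
        ring
    _ = 1 / 4 * ∫ t in (-1 : ℝ)..1, k t ^ 2 := by
        rw [duffyBox, Measure.volume_eq_prod, setIntegral_prod_mul (fun s ↦ s ^ 3)
          (fun t ↦ k t ^ 2), hcube, ← integral_Ioc_eq_integral_Ioo,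
          ← intervalIntegral.integral_of_le (by norm_num)]

variable {f : ℝ × ℝ → ℝ} {g G : ℝ → ℝ}

/- `t g - 2 G` is the second component that makes the degree-one homogeneous field with first
component `g` divergence free. -/
lemma divergence_conicField (hp : p.1 ≠ 0) (hg : Differentiable ℝ g)
    (hG : ∀ t, HasDerivAt G (g t) t) :
    partialFst (conicExtension g) p +
      partialSnd (conicExtension fun t ↦ t * g t - 2 * G t) p = 0 := by
  have hk (t : ℝ) : HasDerivAt (fun t ↦ t * g t - 2 * G t) (t * deriv g t - g t) t := by
    convert! ((hasDerivAt_id t).mul (hg t).hasDerivAt).sub ((hG t).const_mul 2) using 1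
    simp only [id]
    ring
  rw [partialFst_conicExtension hp hg,
    partialSnd_conicExtension hp fun t ↦ (hk t).differentiableAt, (hk _).deriv]
  ring

lemma divergence_mul_conicField (hf : DifferentiableAt ℝ f p) (hp : p.1 ≠ 0)
    (hg : Differentiable ℝ g) (hG : ∀ t, HasDerivAt G (g t) t) :
    partialFst (fun q ↦ f q * conicExtension g q) p +
        partialSnd (fun q ↦ f q * conicExtension (fun t ↦ t * g t - 2 * G t) q) p =
      partialFst f p * conicExtension g p +
        partialSnd f p * conicExtension (fun t ↦ t * g t - 2 * G t) p := by
  have hGd : Differentiable ℝ G := fun t ↦ (hG t).differentiableAt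
  rw [partialFst_mul hf (differentiableAt_conicExtension hp hg),
    partialSnd_mul hf (differentiableAt_conicExtension hp (by fun_prop))]
  linear_combination f p * divergence_conicField hp hg hG

lemma integrableOn_halfTriangle_grad_mul_conicExtension (hf : ContDiff ℝ 1 f) (hg : Continuous g)
    (hk : Continuous k) :
    IntegrableOn (fun p ↦ partialFst f p * conicExtension g p +
      partialSnd f p * conicExtension k p) halfTriangle := by
  have hf₁ := continuous_partialFst hf
  have hf₂ := continuous_partialSnd hf
  rw [integrableOn_halfTriangle_iff]
  simp only [conicExtension_duffy]
  exact integrableOn_of_continuous_of_isBounded (by fun_prop) isBounded_duffyBox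

lemma integral_grad_mul_conicField (hf : ContDiff ℝ 1 f) (hg : ContDiff ℝ 1 g)
    (hG : ∀ t, HasDerivAt G (g t) t) (hneg : G (-1) = 0) (hpos : G 1 = 0) :
    ∫ p in halfTriangle, (partialFst f p * conicExtension g p +
        partialSnd f p * conicExtension (fun t ↦ t * g t - 2 * G t) p) =
      ∫ t in (-1 : ℝ)..1, f (1, t) * g t := by
  have hgd : Differentiable ℝ g := hg.differentiable one_ne_zero
  have hGd : Differentiable ℝ G := fun t ↦ (hG t).differentiableAt
  have hfd : Differentiable ℝ f := hf.differentiable one_ne_zero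
  have hne {p : ℝ × ℝ} (hp : p ∈ halfTriangle) : p.1 ≠ 0 := ((abs_nonneg _).trans_lt hp.1).ne'
  have hdiv := fun p (hp : p ∈ halfTriangle) ↦ divergence_mul_conicField (hfd p) (hne hp) hgd hG
  have hcont {k : ℝ → ℝ} (hk : Continuous k) :
      ContinuousOn (fun p ↦ f (duffy p) * conicExtension k (duffy p)) (Icc (0, -1) (1, 1)) := by
    have hfc := hf.continuous
    simp only [conicExtension_duffy]
    exact Continuous.continuousOn (by fun_prop)
  have hdiff {k : ℝ → ℝ} (hk : Differentiable ℝ k) (p : ℝ × ℝ) (hp : p ∈ halfTriangle) :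
      DifferentiableAt ℝ (fun q ↦ f q * conicExtension k q) p :=
    (hfd p).mul (differentiableAt_conicExtension (hne hp) hk)
  have hk : Differentiable ℝ fun t ↦ t * g t - 2 * G t := by fun_prop
  rw [← setIntegral_congr_fun measurableSet_halfTriangle hdiv,
    integral_divergence_halfTriangle (hcont hgd.continuous) (hcont hk.continuous) (hdiff hgd)
      (hdiff hk) ((integrableOn_halfTriangle_grad_mul_conicExtension hf hgd.continuous
        hk.continuous).congr_fun (fun p hp ↦ (hdiv p hp).symm) measurableSet_halfTriangle)]
  simp [conicExtension_one, conicExtension_diag, conicExtension_antidiag, hneg, hpos]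

end ConicField

lemma two_mul_integral_grad_mul_conicExtension_le {f : ℝ × ℝ → ℝ} {g k : ℝ → ℝ}
    (hf : ContDiff ℝ 1 f) (hg : Continuous g) (hk : Continuous k) :
    2 * ∫ p in halfTriangle,
        (partialFst f p * conicExtension g p + partialSnd f p * conicExtension k p) ≤
      dirichletEnergy halfTriangle f + 1 / 4 * ∫ t in (-1 : ℝ)..1, (g t ^ 2 + k t ^ 2) := by
  have hfint := integrableOn_of_continuous_of_isBounded (μ := volume) (continuous_gradSq hf)
    isBounded_halfTriangle
  have hgint := integrableOn_halfTriangle_conicExtension_sq hg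
  have hkint := integrableOn_halfTriangle_conicExtension_sq hk
  have hgkint : IntegrableOn (fun p ↦ conicExtension g p ^ 2 + conicExtension k p ^ 2)
      halfTriangle := hgint.add hkint
  have hsplit : ∫ t in (-1 : ℝ)..1, (g t ^ 2 + k t ^ 2) =
      (∫ t in (-1 : ℝ)..1, g t ^ 2) + ∫ t in (-1 : ℝ)..1, k t ^ 2 :=
    intervalIntegral.integral_add (Continuous.intervalIntegrable (by fun_prop) _ _)
      (Continuous.intervalIntegrable (by fun_prop) _ _)
  rw [hsplit, mul_add, ← setIntegral_halfTriangle_conicExtension_sq,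
    ← setIntegral_halfTriangle_conicExtension_sq, dirichletEnergy, ← integral_add hgint hkint,
    ← integral_add hfint hgkint, ← integral_const_mul]
  refine integral_mono ((integrableOn_halfTriangle_grad_mul_conicExtension hf hg hk).const_mul 2)
    (hfint.add hgkint) fun p ↦ ?_
  simp only [gradSq]
  linarith [sq_nonneg (partialFst f p - conicExtension g p),
    sq_nonneg (partialSnd f p - conicExtension k p)]

/- Thomson's principle: the energy is bounded below by pairing `∇f` with a divergence-free field
whose flux through the edge `x = 1` is the trace of `f`. -/
theorem integral_sq_le_dirichletEnergy_of_integral_eq_zero {f : ℝ × ℝ → ℝ} (hf : ContDiff ℝ 1 f)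
    (hmean : ∫ t in (-1 : ℝ)..1, f (1, t) = 0) :
    ∫ t in (-1 : ℝ)..1, f (1, t) ^ 2 ≤ dirichletEnergy halfTriangle f := by
  let g : ℝ → ℝ := fun t ↦ f (1, t)
  let G : ℝ → ℝ := fun t ↦ ∫ r in (-1 : ℝ)..t, g r
  have hg : ContDiff ℝ 1 g := by fun_prop
  have hG (t : ℝ) : HasDerivAt G (g t) t :=
    (hg.continuous.integral_hasStrictDerivAt (-1) t).hasDerivAt
  have hGc : Continuous G := continuous_iff_continuousAt.2 fun t ↦ (hG t).continuousAt
  have hneg : G (-1) = 0 := intervalIntegral.integral_same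
  have hflux : ∫ p in halfTriangle, (partialFst f p * conicExtension g p +
      partialSnd f p * conicExtension (fun t ↦ t * g t - 2 * G t) p) =
        ∫ t in (-1 : ℝ)..1, g t ^ 2 := by
    rw [integral_grad_mul_conicField hf hg hG hneg hmean]
    simp only [g, sq]
  have hgc := hg.continuous
  have hyoung := two_mul_integral_grad_mul_conicExtension_le (k := fun t ↦ t * g t - 2 * G t) hf
    hgc (by fun_prop)
  linarith [integral_sq_add_sq_le_four_mul hgc hG hneg hmean]

/-- The reference triangle, an affine image of the triangle `0 < y < x < h`. -/
def referenceTriangle : Set (ℝ × ℝ) := {p | -1 < p.2 ∧ p.2 < p.1 ∧ p.1 < 1}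

/-- The reflection in the line `x + y = 0`, the symmetry of `referenceTriangle`. -/
def negSwap (p : ℝ × ℝ) : ℝ × ℝ := (-p.2, -p.1)

/-- The integral of a function over the two legs `x = 1` and `y = -1` of `referenceTriangle`. -/
noncomputable def legIntegral (u : ℝ × ℝ → ℝ) : ℝ :=
  (∫ t in (-1 : ℝ)..1, u (1, t)) + ∫ t in (-1 : ℝ)..1, u (t, -1)

section Reflection

variable {u : ℝ × ℝ → ℝ}

lemma negSwap_negSwap (p : ℝ × ℝ) : negSwap (negSwap p) = p := by simp [negSwap]

lemma contDiff_negSwap {n : WithTop ℕ∞} : ContDiff ℝ n negSwap := by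
  unfold negSwap
  fun_prop

lemma measurePreserving_negSwap : MeasurePreserving negSwap :=
  (Measure.measurePreserving_neg (volume : Measure (ℝ × ℝ))).comp Measure.measurePreserving_swap

lemma measurableEmbedding_negSwap : MeasurableEmbedding negSwap :=
  (MeasurableEquiv.ofInvolutive negSwap negSwap_negSwap
    measurePreserving_negSwap.measurable).measurableEmbedding

lemma gradSq_comp_negSwap (hu : Differentiable ℝ u) (p : ℝ × ℝ) :
    gradSq (fun q ↦ u (negSwap q)) p = gradSq u (negSwap p) := by
  have hcomp : DifferentiableAt ℝ (fun q ↦ u (negSwap q)) p :=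
    (hu _).comp p (contDiff_negSwap.differentiable one_ne_zero p)
  have hfst : partialFst (fun q ↦ u (negSwap q)) p = -partialSnd u (negSwap p) :=
    partialFst_eq_of_hasDerivAt hcomp <|
      ((hasDerivAt_partialSnd (hu (negSwap p))).scomp p.1 (hasDerivAt_neg p.1)).congr_deriv
        (neg_one_smul ℝ _)
  have hsnd : partialSnd (fun q ↦ u (negSwap q)) p = -partialFst u (negSwap p) :=
    partialSnd_eq_of_hasDerivAt hcomp <|
      ((hasDerivAt_partialFst (hu (negSwap p))).scomp p.2 (hasDerivAt_neg p.2)).congr_deriv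
        (neg_one_smul ℝ _)
  rw [gradSq, gradSq, hfst, hsnd]
  ring

lemma volume_antidiagonal : volume {p : ℝ × ℝ | p.1 + p.2 = 0} = 0 := by
  let L : ℝ × ℝ →ₗ[ℝ] ℝ := LinearMap.fst ℝ ℝ ℝ + LinearMap.snd ℝ ℝ ℝ
  refine Measure.addHaar_submodule volume L.ker fun htop ↦ ?_
  have hmem : ((1, 0) : ℝ × ℝ) ∈ L.ker := htop ▸ Submodule.mem_top
  simp [L] at hmem

lemma referenceTriangle_ae_eq :
    referenceTriangle =ᵐ[volume] (halfTriangle ∪ negSwap ⁻¹' halfTriangle : Set (ℝ × ℝ)) := by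
  have hae : ∀ᵐ p : ℝ × ℝ, p.1 + p.2 ≠ 0 := by
    simpa [ae_iff] using volume_antidiagonal
  filter_upwards [hae] with p hp
  refine propext ⟨fun ⟨hlower, hlt, hupper⟩ ↦ ?_, ?_⟩
  · obtain hneg | hpos := lt_or_gt_of_ne hp
    · exact .inr ⟨abs_lt.2 ⟨by simp only [negSwap]; linarith, by simp only [negSwap]; linarith⟩,
        by simp only [negSwap]; linarith⟩
    · exact .inl ⟨abs_lt.2 ⟨by linarith, hlt⟩, hupper⟩
  · rintro (⟨habs, hupper⟩ | ⟨habs, hupper⟩)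
    · obtain ⟨h₁, h₂⟩ := abs_lt.1 habs
      exact ⟨by linarith, h₂, hupper⟩
    · obtain ⟨h₁, h₂⟩ := abs_lt.1 habs
      simp only [negSwap] at h₁ h₂ hupper
      exact ⟨by linarith, by linarith, by linarith⟩

lemma disjoint_halfTriangle_preimage_negSwap :
    Disjoint halfTriangle (negSwap ⁻¹' halfTriangle) := by
  refine Set.disjoint_left.2 fun p ⟨hp, _⟩ ⟨hp', _⟩ ↦ ?_
  have hadd : -p.1 < p.2 := (abs_lt.1 hp).1
  have hadd' : - -p.2 < -p.1 := (abs_lt.1 hp').1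
  linarith

lemma dirichletEnergy_referenceTriangle (hu : ContDiff ℝ 1 u) :
    dirichletEnergy referenceTriangle u = dirichletEnergy halfTriangle u +
      dirichletEnergy halfTriangle fun p ↦ u (negSwap p) := by
  have hgrad : gradSq u = fun p ↦ gradSq (fun q ↦ u (negSwap q)) (negSwap p) := by
    ext p
    rw [gradSq_comp_negSwap (hu.differentiable one_ne_zero), negSwap_negSwap]
  have hreflect : ∫ p in negSwap ⁻¹' halfTriangle, gradSq u p =
      dirichletEnergy halfTriangle fun p ↦ u (negSwap p) := by
    conv_lhs => rw [hgrad]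
    exact measurePreserving_negSwap.setIntegral_preimage_emb measurableEmbedding_negSwap _ _
  have hint := integrableOn_of_continuous_of_isBounded (μ := volume) (continuous_gradSq hu)
    isBounded_halfTriangle
  have hint' : IntegrableOn (gradSq u) (negSwap ⁻¹' halfTriangle) := by
    rw [hgrad]
    exact (measurePreserving_negSwap.integrableOn_comp_preimage measurableEmbedding_negSwap).2
      (integrableOn_of_continuous_of_isBounded
        (continuous_gradSq (hu.comp contDiff_negSwap)) isBounded_halfTriangle)
  rw [dirichletEnergy, setIntegral_congr_set referenceTriangle_ae_eq,
    setIntegral_union disjoint_halfTriangle_preimage_negSwap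
      (measurePreserving_negSwap.measurable measurableSet_halfTriangle) hint hint', hreflect]
  rfl

lemma legIntegral_eq_add_comp_negSwap (u : ℝ × ℝ → ℝ) :
    legIntegral u = (∫ t in (-1 : ℝ)..1, u (1, t)) + ∫ t in (-1 : ℝ)..1, u (negSwap (1, t)) := by
  have hneg := intervalIntegral.integral_comp_neg (a := -1) (b := 1) fun t ↦ u (t, -1)
  rw [neg_neg] at hneg
  rw [legIntegral, ← hneg]
  rfl

end Reflection

lemma sin_mul_sinh_eq_of_tanh_mul_tan_eq_one {a : ℝ} (hroot : tanh a * tan a = 1) :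
    sin a * sinh a = cos a * cosh a := by
  have hcos : cos a ≠ 0 := fun hcos ↦ by simp [tan_eq_sin_div_cos, hcos] at hroot
  have hcosh := (cosh_pos a).ne'
  rw [tanh_eq_sinh_div_cosh, tan_eq_sin_div_cos] at hroot
  field_simp at hroot
  linarith

section Reference

variable {a : ℝ} {u : ℝ × ℝ → ℝ}

lemma tanh_pos_of_tanh_mul_tan_eq_one (ha : a ∈ Ioo 0 (π / 2)) (hroot : tanh a * tan a = 1) :
    0 < tanh a :=
  pos_of_mul_pos_left (hroot ▸ one_pos) (tan_pos_of_pos_of_lt_pi_div_two ha.1 ha.2).le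

lemma mul_tanh_le_one_of_tanh_mul_tan_eq_one (ha : a ∈ Ioo 0 (π / 2))
    (hroot : tanh a * tan a = 1) : a * tanh a ≤ 1 :=
  calc a * tanh a ≤ tan a * tanh a :=
        mul_le_mul_of_nonneg_right (lt_tan ha.1 ha.2).le
          (tanh_pos_of_tanh_mul_tan_eq_one ha hroot).le
    _ = 1 := by rw [mul_comm, hroot]

lemma mul_tanh_mul_legIntegral_sq_le (ha : a ∈ Ioo 0 (π / 2)) (hroot : tanh a * tan a = 1)
    (hu : ContDiff ℝ 1 u) (hmean : legIntegral u = 0) :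
    a * tanh a * legIntegral (fun p ↦ u p ^ 2) ≤ dirichletEnergy referenceTriangle u := by
  let v : ℝ × ℝ → ℝ := fun p ↦ u (negSwap p)
  have hv : ContDiff ℝ 1 v := hu.comp contDiff_negSwap
  have hint {k : ℝ × ℝ → ℝ} (hk : ContDiff ℝ 1 k) :
      IntervalIntegrable (fun t ↦ k (1, t)) volume (-1) 1 :=
    Continuous.intervalIntegrable (hk.continuous.comp (by fun_prop)) _ _
  have hodd := mul_tanh_mul_integral_sq_le_dirichletEnergy ha.1 (by linarith [ha.2, pi_pos])
    (sin_mul_sinh_eq_of_tanh_mul_tan_eq_one hroot) (hu.sub hv) (by simp [v, negSwap])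
  have heven : a * tanh a * ∫ t in (-1 : ℝ)..1, (u (1, t) + v (1, t)) ^ 2 ≤
      dirichletEnergy halfTriangle fun p ↦ u p + v p := by
    rw [legIntegral_eq_add_comp_negSwap, ← intervalIntegral.integral_add (hint hu) (hint hv)]
      at hmean
    refine le_trans ?_ (integral_sq_le_dirichletEnergy_of_integral_eq_zero (hu.add hv) hmean)
    exact mul_le_of_le_one_left (intervalIntegral.integral_nonneg (by norm_num)
      fun t _ ↦ sq_nonneg _) (mul_tanh_le_one_of_tanh_mul_tan_eq_one ha hroot)
  have hparallelogram : (∫ t in (-1 : ℝ)..1, (u (1, t) + v (1, t)) ^ 2) +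
      (∫ t in (-1 : ℝ)..1, (u (1, t) - v (1, t)) ^ 2) =
        2 * legIntegral fun p ↦ u p ^ 2 := by
    rw [legIntegral_eq_add_comp_negSwap,
      ← intervalIntegral.integral_add (hint (hu.pow 2)) (hint (hv.pow 2)),
      ← intervalIntegral.integral_add (hint ((hu.add hv).pow 2)) (hint ((hu.sub hv).pow 2)),
      ← intervalIntegral.integral_const_mul]
    congr 1 with t
    ring
  have henergy := dirichletEnergy_add_add_dirichletEnergy_sub isBounded_halfTriangle hu hv
  rw [dirichletEnergy_referenceTriangle hu]
  linear_combination (hodd + heven + henergy - a * tanh a * hparallelogram) / 2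

lemma legIntegral_steklovMode (a : ℝ) : legIntegral (steklovMode a) = 0 := by
  simp [legIntegral_eq_add_comp_negSwap, negSwap, steklovMode_neg_swap]

lemma legIntegral_steklovMode_sq (a : ℝ) :
    legIntegral (fun p ↦ steklovMode a p ^ 2) =
      2 * ∫ t in (-1 : ℝ)..1, steklovMode a (1, t) ^ 2 := by
  simp only [legIntegral_eq_add_comp_negSwap, negSwap, steklovMode_neg_swap, neg_sq]
  ring

lemma legIntegral_steklovMode_sq_pos (ha : a ∈ Ioo 0 (π / 2)) (hroot : tanh a * tan a = 1) :
    0 < legIntegral fun p ↦ steklovMode a p ^ 2 := by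
  have hcont : Continuous fun t ↦ steklovMode a (1, t) ^ 2 :=
    ((contDiff_steklovMode a (n := 0)).continuous.comp (by fun_prop)).pow 2
  rw [legIntegral_steklovMode_sq]
  refine mul_pos two_pos (intervalIntegral.intervalIntegral_pos_of_pos_on
    (hcont.intervalIntegrable _ _) (fun t ht ↦ pow_pos (steklovMode_pos ha.1
      (by linarith [ha.2, pi_pos]) (sin_mul_sinh_eq_of_tanh_mul_tan_eq_one hroot) ?_ ?_) 2)
    (by norm_num))
  · exact ⟨⟨by norm_num, ht.1.le⟩, ⟨le_rfl, ht.2.le⟩⟩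
  · linarith [ht.1]

lemma dirichletEnergy_steklovMode (hroot : tanh a * tan a = 1) :
    dirichletEnergy referenceTriangle (steklovMode a) =
      a * tanh a * legIntegral fun p ↦ steklovMode a p ^ 2 := by
  have hreflect : (fun p ↦ steklovMode a (negSwap p)) = fun p ↦ -steklovMode a p :=
    funext fun p ↦ steklovMode_neg_swap a p.1 p.2
  have hhalf : dirichletEnergy halfTriangle (steklovMode a) =
      a * tanh a * ∫ t in (-1 : ℝ)..1, steklovMode a (1, t) ^ 2 := by
    rw [dirichletEnergy_eq_integral_mul_partialFst (contDiff_steklovMode a)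
      (fun p _ ↦ laplacian_steklovMode a p) (partialSnd_steklovMode_diag a)
      (steklovMode_antidiag a), ← intervalIntegral.integral_const_mul]
    congr 1 with t
    rw [partialFst_steklovMode_one (sin_mul_sinh_eq_of_tanh_mul_tan_eq_one hroot)]
    ring
  have hneg : dirichletEnergy halfTriangle (fun p ↦ -steklovMode a p) =
      dirichletEnergy halfTriangle (steklovMode a) := by
    simp only [dirichletEnergy, gradSq_neg]
  rw [dirichletEnergy_referenceTriangle (contDiff_steklovMode a), hreflect, hneg, hhalf,
    legIntegral_steklovMode_sq]
  ring

end Reference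

open scoped Pointwise in
lemma setIntegral_preimage_smul_add {E F : Type*} [NormedAddCommGroup E] [NormedSpace ℝ E]
    [MeasurableSpace E] [BorelSpace E] [FiniteDimensional ℝ E] [NormedAddCommGroup F]
    [NormedSpace ℝ F] (μ : Measure E) [μ.IsAddHaarMeasure] (f : E → F) (S : Set E) (c : E)
    {r : ℝ} (hr : 0 < r) :
    ∫ x in (fun x ↦ r • (x + c)) ⁻¹' S, f (r • (x + c)) ∂μ =
      (r ^ Module.finrank ℝ E)⁻¹ • ∫ x in S, f x ∂μ := by
  have htranslate := (measurePreserving_add_right μ c).setIntegral_preimage_emb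
    (measurableEmbedding_addRight c) (fun x ↦ f (r • x)) ((r • ·) ⁻¹' S)
  rw [preimage_preimage] at htranslate
  rw [htranslate, Measure.setIntegral_comp_smul_of_pos μ f _ hr, preimage_smul₀ hr.ne',
    smul_inv_smul₀ hr.ne']

lemma setIntegral_euclideanSpace_fin_two {F : Type*} [NormedAddCommGroup F] [NormedSpace ℝ F]
    (f : EuclideanSpace ℝ (Fin 2) → F) (S : Set (EuclideanSpace ℝ (Fin 2))) :
    ∫ p in (fun p : ℝ × ℝ ↦ !₂[p.1, p.2]) ⁻¹' S, f !₂[p.1, p.2] = ∫ x in S, f x :=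
  (((volume_preserving_finTwoArrow ℝ).symm _).trans
    (EuclideanSpace.volume_preserving_symm_measurableEquiv_toLp
      (Fin 2)).symm).setIntegral_preimage_emb (MeasurableEquiv.measurableEmbedding _) f S

lemma norm_gradient_sq_fin_two (w : EuclideanSpace ℝ (Fin 2) → ℝ) (x : EuclideanSpace ℝ (Fin 2)) :
    ‖gradient w x‖ ^ 2 = fderiv ℝ w x !₂[1, 0] ^ 2 + fderiv ℝ w x !₂[0, 1] ^ 2 := by
  have hinner (v : EuclideanSpace ℝ (Fin 2)) : fderiv ℝ w x v = inner ℝ (gradient w x) v := by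
    rw [gradient, InnerProductSpace.toDual_symm_apply]
  rw [hinner, hinner]
  generalize gradient w x = g
  simp [PiLp.inner_apply, EuclideanSpace.norm_sq_eq]

/-- The homothety of the plane that takes `referenceTriangle` to the triangle `0 < y < x < h`. -/
noncomputable def fromReference (h : ℝ) (p : ℝ × ℝ) : EuclideanSpace ℝ (Fin 2) :=
  !₂[h / 2 * (1 + p.1), h / 2 * (1 + p.2)]

/-- The inverse of `fromReference h`, for `h ≠ 0`. -/
noncomputable def toReference (h : ℝ) (x : EuclideanSpace ℝ (Fin 2)) : ℝ × ℝ :=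
  (2 / h * x 0 - 1, 2 / h * x 1 - 1)

section Scaling

variable {h : ℝ} {w : EuclideanSpace ℝ (Fin 2) → ℝ}

lemma toReference_fromReference (hh : h ≠ 0) (p : ℝ × ℝ) :
    toReference h (fromReference h p) = p := by
  ext <;> simp [toReference, fromReference] <;> field_simp <;> ring

lemma contDiff_toReference (h : ℝ) {n : WithTop ℕ∞} : ContDiff ℝ n (toReference h) := by
  unfold toReference
  fun_prop

lemma fromReference_eq_smul_add_smul (h : ℝ) (p : ℝ × ℝ) :
    fromReference h p = (h / 2 * (1 + p.1)) • !₂[1, 0] + (h / 2 * (1 + p.2)) • !₂[0, 1] := by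
  ext i
  fin_cases i <;> simp [fromReference]

lemma contDiff_fromReference (h : ℝ) {n : WithTop ℕ∞} : ContDiff ℝ n (fromReference h) := by
  simp only [funext (fromReference_eq_smul_add_smul h)]
  fun_prop

lemma gradSq_comp_fromReference (h : ℝ) (hw : Differentiable ℝ w) (p : ℝ × ℝ) :
    gradSq (fun q ↦ w (fromReference h q)) p =
      (h / 2) ^ 2 * ‖gradient w (fromReference h p)‖ ^ 2 := by
  have hcomp : DifferentiableAt ℝ (fun q ↦ w (fromReference h q)) p :=
    (hw _).comp p ((contDiff_fromReference h).differentiable one_ne_zero p)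
  have hline (t : ℝ) : HasDerivAt (fun s ↦ h / 2 * (1 + s)) (h / 2) t := by
    simpa using ((hasDerivAt_id t).const_add 1).const_mul (h / 2)
  have hfst : HasDerivAt (fun s ↦ fromReference h (s, p.2)) ((h / 2) • !₂[1, 0]) p.1 := by
    simp only [fromReference_eq_smul_add_smul]
    exact ((hline p.1).smul_const _).add_const _
  have hsnd : HasDerivAt (fun s ↦ fromReference h (p.1, s)) ((h / 2) • !₂[0, 1]) p.2 := by
    simp only [fromReference_eq_smul_add_smul]
    exact ((hline p.2).smul_const _).const_add _
  have hderiv := (hw (fromReference h p)).hasFDerivAt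
  rw [gradSq, partialFst_eq_of_hasDerivAt hcomp (hderiv.comp_hasDerivAt p.1 hfst),
    partialSnd_eq_of_hasDerivAt hcomp (hderiv.comp_hasDerivAt p.2 hsnd), norm_gradient_sq_fin_two]
  simp only [map_smul, smul_eq_mul]
  ring

lemma preimage_fromReference (hh : 0 < h) :
    fromReference h ⁻¹' {x | 0 < x 1 ∧ x 1 < x 0 ∧ x 0 < h} = referenceTriangle := by
  ext p
  have hlower : 0 < h / 2 * (1 + p.2) ↔ -1 < p.2 := by
    rw [mul_pos_iff_of_pos_left (half_pos hh)]
    constructor <;> intro <;> linarith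
  have hmiddle : h / 2 * (1 + p.2) < h / 2 * (1 + p.1) ↔ p.2 < p.1 := by
    rw [mul_lt_mul_iff_right₀ (half_pos hh), add_lt_add_iff_left]
  have hupper : h / 2 * (1 + p.1) < h ↔ p.1 < 1 := by
    constructor <;> intro <;> nlinarith
  simp [fromReference, referenceTriangle, hlower, hmiddle, hupper]

lemma setIntegral_comp_fromReference (hh : 0 < h) (f : EuclideanSpace ℝ (Fin 2) → ℝ)
    (S : Set (EuclideanSpace ℝ (Fin 2))) :
    (h / 2) ^ 2 * ∫ p in fromReference h ⁻¹' S, f (fromReference h p) = ∫ x in S, f x := by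
  have hfactor (p : ℝ × ℝ) : fromReference h p = (h / 2) • (!₂[p.1, p.2] + !₂[1, 1]) := by
    ext i
    fin_cases i <;> simp [fromReference, mul_add, add_comm]
  have hprod := setIntegral_euclideanSpace_fin_two
    (fun x ↦ f ((h / 2) • (x + !₂[1, 1]))) ((fun x ↦ (h / 2) • (x + !₂[1, 1])) ⁻¹' S)
  rw [setIntegral_preimage_smul_add volume f S _ (half_pos hh), finrank_euclideanSpace_fin,
    preimage_preimage] at hprod
  have hne : (h / 2) ^ 2 ≠ 0 := (pow_pos (half_pos hh) 2).ne'
  simp only [funext hfactor]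
  rw [hprod, smul_eq_mul, mul_inv_cancel_left₀ hne]

lemma setIntegral_norm_gradient_sq (hh : 0 < h) (hw : Differentiable ℝ w) :
    ∫ x in {x : EuclideanSpace ℝ (Fin 2) | 0 < x 1 ∧ x 1 < x 0 ∧ x 0 < h}, ‖gradient w x‖ ^ 2 =
      dirichletEnergy referenceTriangle fun p ↦ w (fromReference h p) := by
  rw [← setIntegral_comp_fromReference hh, preimage_fromReference hh, ← integral_const_mul]
  exact integral_congr_ae (.of_forall fun p ↦ (gradSq_comp_fromReference h hw p).symm)

lemma integral_legs_eq (h : ℝ) (f : EuclideanSpace ℝ (Fin 2) → ℝ) :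
    (∫ t in (0 : ℝ)..h, f !₂[h, t]) + (∫ s in (0 : ℝ)..h, f !₂[s, 0]) =
      h / 2 * legIntegral fun p ↦ f (fromReference h p) := by
  have hscale (k : ℝ → ℝ) :
      ∫ t in (0 : ℝ)..h, k t = h / 2 * ∫ t in (-1 : ℝ)..1, k (h / 2 * (1 + t)) := by
    simp [mul_add]
  rw [hscale, hscale, legIntegral, mul_add]
  simp [fromReference, one_add_one_eq_two]

end Scaling

lemma isLeast_one_div_sqrt {W : Type*} {adm : W → Prop} {N E : W → ℝ} {κ : ℝ} (hκ : 0 < κ)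
    (hle : ∀ w, adm w → κ * N w ≤ E w) {w₀ : W} (hw₀ : adm w₀) (hpos : 0 < N w₀)
    (heq : E w₀ = κ * N w₀) :
    IsLeast {C : ℝ | ∀ w, adm w → √(N w) ≤ C * √(E w)} (1 / √κ) := by
  refine ⟨fun w hw ↦ ?_, fun C hC ↦ ?_⟩
  · rw [one_div_mul_eq_div, le_div_iff₀ (sqrt_pos.2 hκ), mul_comm, ← sqrt_mul hκ.le]
    exact sqrt_le_sqrt (hle w hw)
  · have hC₀ := hC w₀ hw₀
    rw [heq, sqrt_mul hκ.le, ← mul_assoc] at hC₀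
    rw [div_le_iff₀ (sqrt_pos.2 hκ)]
    exact le_of_mul_le_mul_right (by simpa using hC₀) (sqrt_pos.2 hpos)

end TriangleTrace

/-- The sharp constant `C₂(Ω,Γ)` in `‖w‖_{L²(Γ)} ≤ C₂ ‖∇w‖_{L²(Ω)}` for functions
with zero mean trace on `Γ`, where `Ω = {0 < x₂ < x₁ < h}` is an isosceles right
triangle and `Γ` is the union of the two legs, equals `((2z₀/h)·tanh z₀)^(-1/2)`,
where `z₀` is the unique root of `tanh z · tan z = 1` in `(0, π/2)`
(`z₀ ≈ 0.93755`). -/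
theorem triangle_two_legs_C2 (h : ℝ) (hh : 0 < h) (z₀ : ℝ)
    (hz₀ : z₀ ∈ Set.Ioo 0 (π / 2) ∧ Real.tanh z₀ * Real.tan z₀ = 1)
    (huniq : ∀ z ∈ Set.Ioo (0:ℝ) (π / 2), Real.tanh z * Real.tan z = 1 → z = z₀) :
    IsLeast {C : ℝ |
      ∀ w : EuclideanSpace ℝ (Fin 2) → ℝ, ContDiff ℝ 1 w →
        ((∫ t in (0:ℝ)..h, w !₂[h, t]) + (∫ s in (0:ℝ)..h, w !₂[s, 0])) = 0 →
        Real.sqrt ((∫ t in (0:ℝ)..h, (w !₂[h, t]) ^ 2) +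
            (∫ s in (0:ℝ)..h, (w !₂[s, 0]) ^ 2)) ≤
          C * Real.sqrt (∫ x in {x : EuclideanSpace ℝ (Fin 2) |
            0 < x 1 ∧ x 1 < x 0 ∧ x 0 < h}, ‖gradient w x‖ ^ 2)}
      (1 / Real.sqrt (2 * z₀ / h * Real.tanh z₀)) := by
  obtain ⟨hz₀_mem, hroot⟩ := hz₀
  have hκ : 0 < 2 * z₀ / h * tanh z₀ := mul_pos (div_pos (mul_pos two_pos hz₀_mem.1) hh)
    (tanh_pos_of_tanh_mul_tan_eq_one hz₀_mem hroot)
  have hmode : ContDiff ℝ 1 fun x ↦ steklovMode z₀ (toReference h x) :=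
    (contDiff_steklovMode z₀).comp (contDiff_toReference h)
  have hscale (L : ℝ) : 2 * z₀ / h * tanh z₀ * (h / 2 * L) = z₀ * tanh z₀ * L := by
    field_simp
  simp only [← and_imp]
  refine isLeast_one_div_sqrt (adm := fun w ↦ ContDiff ℝ 1 w ∧ _) hκ
    (w₀ := fun x ↦ steklovMode z₀ (toReference h x)) ?_ ⟨hmode, ?_⟩ ?_ ?_
  · rintro w ⟨hw, hmean⟩
    rw [integral_legs_eq h w, mul_eq_zero_iff_left (half_pos hh).ne'] at hmean
    rw [integral_legs_eq h fun x ↦ w x ^ 2, hscale,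
      setIntegral_norm_gradient_sq hh (hw.differentiable one_ne_zero)]
    exact mul_tanh_mul_legIntegral_sq_le hz₀_mem hroot (hw.comp (contDiff_fromReference h)) hmean
  · rw [integral_legs_eq h fun x ↦ steklovMode z₀ (toReference h x)]
    simp [toReference_fromReference hh.ne', legIntegral_steklovMode]
  · rw [integral_legs_eq h fun x ↦ steklovMode z₀ (toReference h x) ^ 2]
    simpa [toReference_fromReference hh.ne', hh] using legIntegral_steklovMode_sq_pos hz₀_mem hroot
  · rw [integral_legs_eq h fun x ↦ steklovMode z₀ (toReference h x) ^ 2, hscale,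
      setIntegral_norm_gradient_sq hh (hmode.differentiable one_ne_zero)]
    simpa [toReference_fromReference hh.ne'] using dirichletEnergy_steklovMode hroot
end
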